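/- arXiv:2503.12997 — 2 statements merged into one kernel-verified Lean document; each statement's English description precedes it below -/
import Mathlib

section
/- Assume MA(σ-centered). Then there exists a subgroup G of Sym(Ω), for Ω countably infinite, which is proper, dense in the topology of pointwise convergence, and such that for every pair of isomorphic inductively flexible structures M, M′ with universe Ω there exists f ∈ G which is an isomorphism from M to M′. In particular G acts transitively on the set of all structures on Ω isomorphic to any fixed inductively flexible structure. -/
def StronglyIndependent {Ω : Type} (G : Set (Equiv.Perm Ω)) : Prop :=
  ∀ (n : ℕ) (w : FreeGroup (Fin (n + 1))), w ≠ 1 →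
    ∀ f : Fin (n + 1) → Equiv.Perm Ω, Function.Injective f → (∀ i, f i ∈ G) →
      {x : Ω | FreeGroup.lift f w x = x}.Finite

def FlexibleWitness {Ω : Type} (Aut : Set (Equiv.Perm Ω)) (F : Set (Set (Ω × Ω))) : Prop :=
  (∀ f ∈ F, Set.Finite f) ∧
  (∀ f ∈ F, ∃ g ∈ Aut, ∀ p ∈ f, g p.1 = p.2) ∧
  ∅ ∈ F ∧
  (∀ f ∈ F, Prod.swap '' f ∈ F) ∧
  (∀ f ∈ F, ∀ a : Ω, a ∉ Prod.fst '' f → {b : Ω | insert (a, b) f ∈ F}.Infinite)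

/-- A relational structure on universe `Ω` with relation symbols indexed by `I` of arities `ar`. -/
structure RelStruct (Ω I : Type) (ar : I → ℕ) where
  rel : ∀ i : I, (Fin (ar i) → Ω) → Prop

/-- `g` is an isomorphism from `M` to `N` (both with universe `Ω`), by transport of structure. -/
def IsIso {Ω I : Type} {ar : I → ℕ} (g : Equiv.Perm Ω) (M N : RelStruct Ω I ar) : Prop :=
  ∀ (i : I) (t : Fin (ar i) → Ω), N.rel i (fun k => g (t k)) ↔ M.rel i t

def InductivelyFlexible {Ω I : Type} {ar : I → ℕ} (M : RelStruct Ω I ar) : Prop :=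
  ∃ F : Set (Set (Ω × Ω)), FlexibleWitness {g | IsIso g M M} F

def Centered {P : Type} [Preorder P] (Q : Set P) : Prop :=
  ∀ S : Finset P, ↑S ⊆ Q → ∃ p : P, ∀ q ∈ S, q ≤ p

def SigmaCentered (P : Type) [Preorder P] : Prop :=
  ∃ C : ℕ → Set P, (∀ n, Centered (C n)) ∧ (⋃ n, C n) = Set.univ

/-- Martin's Axiom for σ-centered partial orders: for any nonempty σ-centered partial order
and any family of fewer than continuum many open dense subsets, there is a filter meeting
every member of the family. -/
def MASigmaCentered : Prop :=
  ∀ (P : Type) [Preorder P], Nonempty P → SigmaCentered P →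
    ∀ 𝒟 : Set (Set P),
      (∀ D ∈ 𝒟, (∀ p ∈ D, ∀ q, p ≤ q → q ∈ D) ∧ (∀ p, ∃ q ∈ D, p ≤ q)) →
      Cardinal.mk ↥𝒟 < Cardinal.continuum →
      ∃ Q : Set P, Q.Nonempty ∧
        (∀ q₀ ∈ Q, ∀ q₁ ∈ Q, ∃ q ∈ Q, q₀ ≤ q ∧ q₁ ≤ q) ∧
        (∀ p q : P, p ≤ q → q ∈ Q → p ∈ Q) ∧
        ∀ D ∈ 𝒟, (Q ∩ D).Nonempty



namespace FlexProof

/-- A group element set has small fixed-point sets. -/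
def Small {Ω : Type} (k : Equiv.Perm Ω) : Prop := k ≠ 1 → {x : Ω | k x = x}.Finite

/-- A family of finite partial injections with infinitely many one-point extensions. -/
structure Good {Ω : Type} [DecidableEq Ω] (F : Set (Finset (Ω × Ω))) : Prop where
  nonempty : F.Nonempty
  func : ∀ p ∈ F, ∀ a b c, (a, b) ∈ p → (a, c) ∈ p → b = c
  inj : ∀ p ∈ F, ∀ a b c, (a, c) ∈ p → (b, c) ∈ p → a = b
  dom : ∀ p ∈ F, ∀ a, (∀ b, (a, b) ∉ p) → {b | insert (a, b) p ∈ F}.Infinite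
  ran : ∀ p ∈ F, ∀ b, (∀ a, (a, b) ∉ p) → {a | insert (a, b) p ∈ F}.Infinite

/-- Cyclically reduced words. -/
def Red {G : Type} [Group G] (L : List (G × Bool)) : Prop :=
  ∀ (i j : ℕ) (hi : i < L.length) (hj : j < L.length), j = (i + 1) % L.length →
    L[j].2 = !L[i].2 → L[j].1 ≠ 1

/-- The oriented edges of a relation. -/
def Edge {Ω : Type} (R : Ω → Ω → Prop) (e : Bool) (u v : Ω) : Prop :=
  match e with
  | true => R u v
  | false => R v u

/-- `x` is a closed path along the word `L`. -/
def IsCyc {Ω : Type} {G : Subgroup (Equiv.Perm Ω)} (E : Bool → Ω → Ω → Prop)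
    (L : List (G × Bool)) (x : ℕ → Ω) : Prop :=
  ∀ (i : ℕ) (hi : i < L.length), ∃ u, E L[i].2 (x ((i + 1) % L.length)) u ∧
    x i = (L[i].1 : Equiv.Perm Ω) u

/-- Fixed points of the word `L` evaluated at the partial map with edges `E`. -/
def FixW {Ω : Type} {G : Subgroup (Equiv.Perm Ω)} (E : Bool → Ω → Ω → Prop)
    (L : List (G × Bool)) : Set Ω := {z | ∃ x : ℕ → Ω, x 0 = z ∧ IsCyc E L x}

theorem cyc_ext {Ω : Type} {G : Subgroup (Equiv.Perm Ω)} (E E' : Bool → Ω → Ω → Prop)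
    (D : Set Ω) (ε : Bool) (a c : Ω) (hED : ∀ e u v, E e u v → u ∈ D ∧ v ∈ D) (ha : a ∈ D)
    (hE' : ∀ e u v, E' e u v → E e u v ∨ (e = ε ∧ u = a ∧ v = c) ∨ (e = !ε ∧ u = c ∧ v = a))
    (L : List (G × Bool)) (hL : Red L)
    (hc : ∀ l ∈ L, (l.1 : Equiv.Perm Ω) c ∉ D ∧ (∀ u ∈ D, (l.1 : Equiv.Perm Ω) u ≠ c) ∧
      (l.1 ≠ 1 → (l.1 : Equiv.Perm Ω) c ≠ c)) (x : ℕ → Ω) (hx : IsCyc E' L x) :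
    IsCyc E L x := by
  intro i hi
  obtain ⟨u, hu, hxu⟩ := hx i hi
  refine ⟨u, ?_, hxu⟩
  have hpos : 0 < L.length := by omega
  rcases hE' _ _ _ hu with h | ⟨he, h1, h2⟩ | ⟨he, h1, h2⟩
  · exact h
  · exfalso
    obtain ⟨j, hj, hji⟩ : ∃ j, j < L.length ∧ i = (j + 1) % L.length := by
      rcases Nat.eq_zero_or_pos i with h0 | h0
      · refine ⟨L.length - 1, by omega, ?_⟩
        rw [Nat.sub_add_cancel hpos, Nat.mod_self, h0]
      · refine ⟨i - 1, by omega, ?_⟩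
        rw [Nat.sub_add_cancel h0, Nat.mod_eq_of_lt hi]
    obtain ⟨v, hv, -⟩ := hx j hj
    rw [← hji] at hv
    obtain ⟨k1, k2, k3⟩ := hc L[i] (List.getElem_mem hi)
    subst h2
    rw [← hxu] at k1 k3
    rcases hE' _ _ _ hv with h | ⟨he', h1', h2'⟩ | ⟨he', h1', h2'⟩
    · exact k1 (hED _ _ _ h).1
    · exact k1 (h1' ▸ ha)
    · refine k3 (hL j i hj hi hji ?_) h1'
      rw [he, he', Bool.not_not]
  · exfalso
    have hk : (i + 1) % L.length < L.length := Nat.mod_lt _ hpos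
    obtain ⟨v, hv, hxv⟩ := hx _ hk
    obtain ⟨k1, k2, k3⟩ := hc L[(i + 1) % L.length] (List.getElem_mem hk)
    rw [h1] at hxv
    rcases hE' _ _ _ hv with h | ⟨he', h1', h2'⟩ | ⟨he', h1', h2'⟩
    · exact k2 v (hED _ _ _ h).2 hxv.symm
    · subst h2'
      refine k3 (hL i _ hi hk rfl ?_) hxv.symm
      rw [he, he', Bool.not_not]
    · subst h2'
      exact k2 v ha hxv.symm

theorem bad_finite {Ω : Type} {G : Subgroup (Equiv.Perm Ω)}
    (hG : ∀ k ∈ G, Small k) (D : Set Ω) (hD : D.Finite) (L : List (G × Bool)) :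
    {c : Ω | ¬ ∀ l ∈ L, (l.1 : Equiv.Perm Ω) c ∉ D ∧ (∀ u ∈ D, (l.1 : Equiv.Perm Ω) u ≠ c) ∧
      (l.1 ≠ 1 → (l.1 : Equiv.Perm Ω) c ≠ c)}.Finite := by
  have hsub : {c : Ω | ¬ ∀ l ∈ L, (l.1 : Equiv.Perm Ω) c ∉ D ∧
      (∀ u ∈ D, (l.1 : Equiv.Perm Ω) u ≠ c) ∧
      (l.1 ≠ 1 → (l.1 : Equiv.Perm Ω) c ≠ c)} ⊆
      ⋃ l ∈ {l | l ∈ L}, ((l.1 : Equiv.Perm Ω) ⁻¹' D ∪ (l.1 : Equiv.Perm Ω) '' D ∪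
        {c | l.1 ≠ 1 ∧ (l.1 : Equiv.Perm Ω) c = c}) := by
    intro c hc
    simp only [Set.mem_ofPred_eq, not_forall] at hc
    obtain ⟨l, hl, h⟩ := hc
    simp only [Set.mem_iUnion, Set.mem_ofPred_eq]
    refine ⟨l, hl, ?_⟩
    by_contra hcon
    apply h
    simp only [Set.mem_union, Set.mem_preimage, Set.mem_image, Set.mem_ofPred_eq, not_or,
      not_exists, not_and] at hcon
    exact ⟨hcon.1.1, hcon.1.2, hcon.2⟩
  refine Set.Finite.subset (Set.Finite.biUnion (List.finite_toSet L) ?_) hsub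
  intro l _
  refine ((hD.preimage ((l.1 : Equiv.Perm Ω).injective.injOn)).union (hD.image _)).union ?_
  by_cases h1 : l.1 = 1
  · simp [h1]
  · refine (hG l.1 l.1.2 ?_).subset (fun c hc => hc.2)
    simpa using h1

theorem fixW_finite {Ω : Type} {G : Subgroup (Equiv.Perm Ω)} (E : Bool → Ω → Ω → Prop)
    (D : Set Ω) (hD : D.Finite) (hED : ∀ e u v, E e u v → u ∈ D ∧ v ∈ D)
    (L : List (G × Bool)) (hL : L ≠ []) : (FixW E L).Finite := by
  have hpos : 0 < L.length := List.length_pos_iff.2 hL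
  refine (hD.image (L[0].1 : Equiv.Perm Ω)).subset ?_
  rintro z ⟨x, rfl, hx⟩
  obtain ⟨u, hu, h⟩ := hx 0 hpos
  exact ⟨u, (hED _ _ _ hu).2, h.symm⟩

/-- Value of a word. -/
def val {Ω : Type} {G : Subgroup (Equiv.Perm Ω)} (f : Equiv.Perm Ω) (L : List (G × Bool)) :
    Equiv.Perm Ω := (L.map fun l => (l.1 : Equiv.Perm Ω) * (if l.2 then f else f⁻¹)).prod

theorem edge_perm {Ω : Type} (f : Equiv.Perm Ω) (e : Bool) (u : Ω) :
    Edge (fun a b => f a = b) e u ((if e then f else f⁻¹) u) := by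
  cases e <;> simp [Edge]

theorem val_append {Ω : Type} {G : Subgroup (Equiv.Perm Ω)} (f : Equiv.Perm Ω)
    (L M : List (G × Bool)) : val f (L ++ M) = val f L * val f M := by
  simp [val]

theorem val_cons {Ω : Type} {G : Subgroup (Equiv.Perm Ω)} (f : Equiv.Perm Ω)
    (l : G × Bool) (M : List (G × Bool)) :
    val f (l :: M) = (l.1 : Equiv.Perm Ω) * (if l.2 then f else f⁻¹) * val f M := by
  simp [val]

theorem fix_sub {Ω : Type} {G : Subgroup (Equiv.Perm Ω)} (f : Equiv.Perm Ω)
    (L : List (G × Bool)) : {z | val f L z = z} ⊆ FixW (Edge fun a b => f a = b) L := by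
  intro z hz
  refine ⟨fun i => val f (L.drop i) z, by simpa using hz, ?_⟩
  intro i hi
  have key : val f (L.drop ((i + 1) % L.length)) z = val f (L.drop (i + 1)) z := by
    rcases Nat.lt_or_ge (i + 1) L.length with h | h
    · rw [Nat.mod_eq_of_lt h]
    · have : i + 1 = L.length := by omega
      rw [this, Nat.mod_self, List.drop_length, List.drop_zero]
      simpa [val] using hz
  refine ⟨_, edge_perm f _ _, ?_⟩
  simp only [key]
  rw [List.drop_eq_getElem_cons hi, val_cons]
  rfl

theorem small_conj {Ω : Type} (k c : Equiv.Perm Ω) (h : Small k) : Small (c * k * c⁻¹) := by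
  intro h1
  have hk : k ≠ 1 := by
    rintro rfl
    apply h1
    simp
  refine ((h hk).image c).subset ?_
  intro x hx
  refine ⟨c⁻¹ x, ?_, by simp⟩
  have hx' : c (k (c⁻¹ x)) = x := hx
  have : k (c⁻¹ x) = c⁻¹ x := by
    rw [Equiv.Perm.eq_inv_iff_eq]
    exact hx'
  exact this

theorem small_rotate {Ω : Type} {G : Subgroup (Equiv.Perm Ω)} (f : Equiv.Perm Ω)
    (L : List (G × Bool)) (n : ℕ) (h : Small (val f (L.rotate n))) : Small (val f L) := by
  have h1 : L.rotate (n % L.length) = L.rotate n := List.rotate_mod L n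
  rcases Nat.eq_zero_or_pos L.length with h0 | h0
  · rw [List.length_eq_zero_iff] at h0
    subst h0
    simpa using h
  · rw [← h1, List.rotate_eq_drop_append_take (Nat.mod_lt _ h0).le, val_append] at h
    have h2 := small_conj _ (val f (L.take (n % L.length))) h
    have h3 : val f L = val f (L.take (n % L.length)) * val f (L.drop (n % L.length)) := by
      rw [← val_append, List.take_append_drop]
    rw [h3]
    convert h2 using 1
    group

theorem small_word {Ω : Type} {G : Subgroup (Equiv.Perm Ω)} (hG : ∀ k ∈ G, Small k)
    (f : Equiv.Perm Ω)
    (hf : ∀ L : List (G × Bool), L ≠ [] → Red L → {z | val f L z = z}.Finite) :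
    ∀ (n : ℕ) (L : List (G × Bool)), L.length = n → Small (val f L) := by
  intro n
  induction n using Nat.strong_induction_on with
  | _ n ih =>
  intro L hn
  by_cases hnil : L = []
  · subst hnil
    exact fun h => (h (by simp [val])).elim
  by_cases hred : Red L
  · exact fun _ => hf L hnil hred
  unfold Red at hred
  push Not at hred
  obtain ⟨i, j, hi, hj, hji, he, h1⟩ := hred
  subst hji
  apply small_rotate f L i
  have hlen : (L.rotate i).length = L.length := List.length_rotate L i
  have e0 : ∀ h, (L.rotate i)[0]'h = L[i] := by
    intro h
    rw [List.getElem_rotate]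
    simp [Nat.mod_eq_of_lt hi]
  have e1 : ∀ h, (L.rotate i)[1]'h = L[(i + 1) % L.length] := by
    intro h
    rw [List.getElem_rotate]
    simp [Nat.add_comm]
  generalize hR : L.rotate i = R at *
  match R, hlen, e0, e1 with
  | [], hlen, e0, e1 => simp at hlen; omega
  | [a], hlen, e0, e1 =>
    exfalso
    have h2 : L.length = 1 := by simpa using hlen.symm
    have h3 : i = 0 := by omega
    subst h3
    simp [h2] at he
  | a :: b :: rest, hlen, e0, e1 =>
    have ea : a = L[i] := e0 (by simp)
    have eb : b = L[(i + 1) % L.length] := e1 (by simp)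
    rw [← ea, ← eb] at he
    rw [← eb] at h1
    have hv : val f (a :: b :: rest) = (a.1 : Equiv.Perm Ω) * val f rest := by
      rw [val_cons, val_cons, h1, he]
      cases a.2 <;> simp [mul_assoc]
    rw [hv]
    simp only [List.length_cons] at hlen
    match rest, hlen with
    | [], hlen =>
      simpa [val] using hG _ a.1.2
    | c :: rest', hlen =>
      have := ih (rest'.length + 1) (by simp at hlen; omega) ((a.1 * c.1, c.2) :: rest') (by simp)
      rw [val_cons] at this ⊢
      simpa [mul_assoc] using this

theorem small_closure {Ω : Type} {G : Subgroup (Equiv.Perm Ω)} (hG : ∀ k ∈ G, Small k)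
    (f : Equiv.Perm Ω)
    (hf : ∀ L : List (G × Bool), L ≠ [] → Red L → {z | val f L z = z}.Finite) :
    ∀ k ∈ Subgroup.closure ((G : Set (Equiv.Perm Ω)) ∪ {f}), Small k := by
  have hrep : ∀ k ∈ Subgroup.closure ((G : Set (Equiv.Perm Ω)) ∪ {f}),
      ∃ (L : List (G × Bool)) (g : G), k = val f L * g := by
    have hmul : ∀ (g : G) (L : List (G × Bool)) (g' : G), ∃ (M : List (G × Bool)) (g'' : G),
        (g : Equiv.Perm Ω) * (val f L * g') = val f M * g'' := by
      intro g L g'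
      match L with
      | [] => exact ⟨[], g * g', by simp [val]⟩
      | l :: L => exact ⟨(g * l.1, l.2) :: L, g', by simp [val_cons, mul_assoc]⟩
    intro k hk
    induction hk using Subgroup.closure_induction_left with
    | one => exact ⟨[], 1, by simp [val]⟩
    | mul_left x hx y hy ih =>
      obtain ⟨L, g, rfl⟩ := ih
      rcases hx with hx | hx
      · exact hmul ⟨x, hx⟩ L g
      · rw [Set.mem_singleton_iff] at hx
        subst hx
        exact ⟨(1, true) :: L, g, by simp [val_cons, mul_assoc]⟩
    | inv_mul_cancel x hx y hy ih =>
      obtain ⟨L, g, rfl⟩ := ih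
      rcases hx with hx | hx
      · exact hmul (⟨x, hx⟩ : G)⁻¹ L g
      · rw [Set.mem_singleton_iff] at hx
        subst hx
        exact ⟨(1, false) :: L, g, by simp [val_cons, mul_assoc]⟩
  intro k hk
  obtain ⟨L, g, rfl⟩ := hrep k hk
  match L with
  | [] => simpa [val] using hG g g.2
  | l :: L =>
    have h := small_word hG f hf _ ((g * l.1, l.2) :: L) rfl
    have h2 := small_conj _ (g : Equiv.Perm Ω)⁻¹ h
    convert h2 using 1
    simp [val_cons, mul_assoc]

/-- Edges of a finite partial map. -/
def pE {Ω : Type} (p : Finset (Ω × Ω)) : Bool → Ω → Ω → Prop := Edge fun a b => (a, b) ∈ p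

theorem pE_mono {Ω : Type} {p q : Finset (Ω × Ω)} (h : p ⊆ q) (e : Bool) (u v : Ω)
    (huv : pE p e u v) : pE q e u v := by
  cases e <;> exact h huv

theorem pE_dom {Ω : Type} [DecidableEq Ω] (p : Finset (Ω × Ω)) (e : Bool) (u v : Ω)
    (huv : pE p e u v) :
    u ∈ p.image Prod.fst ∪ p.image Prod.snd ∧ v ∈ p.image Prod.fst ∪ p.image Prod.snd := by
  simp only [Finset.mem_union, Finset.mem_image]
  cases e
  · exact ⟨Or.inr ⟨_, huv, rfl⟩, Or.inl ⟨_, huv, rfl⟩⟩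
  · exact ⟨Or.inl ⟨_, huv, rfl⟩, Or.inr ⟨_, huv, rfl⟩⟩

/-- Reduced nonempty words. -/
abbrev Wd {Ω : Type} (G : Subgroup (Equiv.Perm Ω)) : Type :=
  {L : List (G × Bool) // L ≠ [] ∧ Red L}

/-- Forcing conditions. -/
structure Cond {Ω : Type} (G : Subgroup (Equiv.Perm Ω)) (F : Set (Finset (Ω × Ω))) : Type where
  p : Finset (Ω × Ω)
  hp : p ∈ F
  H : Finset (Wd G)

instance {Ω : Type} (G : Subgroup (Equiv.Perm Ω)) (F : Set (Finset (Ω × Ω))) :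
    Preorder (Cond G F) where
  le c d := c.p ⊆ d.p ∧ c.H ⊆ d.H ∧ ∀ L ∈ c.H, FixW (pE d.p) L.1 ⊆ FixW (pE c.p) L.1
  le_refl c := ⟨subset_rfl, subset_rfl, fun _ _ => subset_rfl⟩
  le_trans c d e h1 h2 := ⟨h1.1.trans h2.1, h1.2.1.trans h2.2.1,
    fun L hL => (h2.2.2 L (h1.2.1 hL)).trans (h1.2.2 L hL)⟩

theorem cond_le {Ω : Type} {G : Subgroup (Equiv.Perm Ω)} {F : Set (Finset (Ω × Ω))}
    (c d : Cond G F) : c ≤ d ↔ c.p ⊆ d.p ∧ c.H ⊆ d.H ∧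
      ∀ L ∈ c.H, FixW (pE d.p) L.1 ⊆ FixW (pE c.p) L.1 := Iff.rfl

theorem extend {Ω : Type} [DecidableEq Ω] {G : Subgroup (Equiv.Perm Ω)}
    (hG : ∀ k ∈ G, Small k) (p : Finset (Ω × Ω)) (H : Finset (Wd G)) (a : Ω) (ε : Bool)
    (S : Set Ω) (hS : S.Infinite) :
    ∃ c ∈ S, ∀ q : Finset (Ω × Ω), q = insert (if ε then (a, c) else (c, a)) p →
      ∀ L ∈ H, FixW (pE q) L.1 ⊆ FixW (pE p) L.1 := by
  set D : Set Ω := insert a (↑(p.image Prod.fst ∪ p.image Prod.snd) : Set Ω) with hDdef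
  have hD : D.Finite := (Finset.finite_toSet _).insert a
  have hbad : (⋃ L ∈ (H : Set (Wd G)), {c : Ω | ¬ ∀ l ∈ L.1, (l.1 : Equiv.Perm Ω) c ∉ D ∧
      (∀ u ∈ D, (l.1 : Equiv.Perm Ω) u ≠ c) ∧
      (l.1 ≠ 1 → (l.1 : Equiv.Perm Ω) c ≠ c)}).Finite :=
    Set.Finite.biUnion H.finite_toSet fun L _ => bad_finite hG D hD L.1
  obtain ⟨c, hcS, hc⟩ := (hS.sdiff hbad).nonempty
  refine ⟨c, hcS, ?_⟩
  rintro q hq L hL z ⟨x, hx0, hx⟩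
  refine ⟨x, hx0, ?_⟩
  refine cyc_ext (pE p) (pE q) D ε a c ?_ (Set.mem_insert _ _) ?_ L.1 L.2.2 ?_ x hx
  · intro e u v h
    have := pE_dom p e u v h
    exact ⟨Set.mem_insert_of_mem _ this.1, Set.mem_insert_of_mem _ this.2⟩
  · intro e u v h
    subst hq
    cases e <;> cases ε <;> simp [pE, Edge] at h ⊢ <;> tauto
  · by_contra hcon
    exact hc (Set.mem_biUnion (Finset.mem_coe.2 hL) hcon)

theorem step {Ω : Type} [Countable Ω] [DecidableEq Ω] (hMA : MASigmaCentered)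
    (G : Subgroup (Equiv.Perm Ω)) (hcard : Cardinal.mk G < Cardinal.continuum)
    (hG : ∀ k ∈ G, Small k) (F : Set (Finset (Ω × Ω))) (hF : Good F) :
    ∃ f : Equiv.Perm Ω,
      (∀ D : Finset Ω, ∃ p ∈ F, (∀ d ∈ D, ∃ v, (d, v) ∈ p) ∧ ∀ a b, (a, b) ∈ p → f a = b) ∧
      ∀ k ∈ Subgroup.closure ((G : Set (Equiv.Perm Ω)) ∪ {f}), Small k := by
  classical
  obtain ⟨p0, hp0⟩ := hF.nonempty
  have hne : Nonempty (Cond G F) := ⟨⟨p0, hp0, ∅⟩⟩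
  have hsc : SigmaCentered (Cond G F) := by
    have hcnt : Countable (Finset (Ω × Ω)) := inferInstance
    have hne' : Nonempty (Finset (Ω × Ω)) := ⟨∅⟩
    obtain ⟨en, hen⟩ := exists_surjective_nat (Finset (Ω × Ω))
    refine ⟨fun n => {c | c.p = en n}, ?_, ?_⟩
    · intro n S hS
      by_cases hn : en n ∈ F
      · refine ⟨⟨en n, hn, S.biUnion Cond.H⟩, fun q hq => ?_⟩
        have hqp : q.p = en n := hS hq
        rw [cond_le]
        refine ⟨hqp.subset, Finset.subset_biUnion_of_mem Cond.H hq, fun L _ => ?_⟩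
        simp only [hqp]
        exact subset_rfl
      · refine ⟨⟨p0, hp0, ∅⟩, fun q hq => ?_⟩
        have hqp : q.p = en n := hS hq
        exact (hn (hqp ▸ q.hp)).elim
    · ext c
      simp only [Set.mem_iUnion, Set.mem_univ, iff_true]
      obtain ⟨n, hn⟩ := hen c.p
      exact ⟨n, hn.symm⟩
  let DD : Ω ⊕ (Ω ⊕ Wd G) → Set (Cond G F) := fun i =>
    match i with
    | .inl a => {c | ∃ b, (a, b) ∈ c.p}
    | .inr (.inl b) => {c | ∃ a, (a, b) ∈ c.p}
    | .inr (.inr L) => {c | L ∈ c.H}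
  have hDD : ∀ D ∈ Set.range DD,
      (∀ p ∈ D, ∀ q, p ≤ q → q ∈ D) ∧ (∀ p, ∃ q ∈ D, p ≤ q) := by
    rintro _ ⟨i, rfl⟩
    match i with
    | .inl a =>
      refine ⟨?_, ?_⟩
      · rintro p ⟨b, hb⟩ q hpq
        exact ⟨b, hpq.1 hb⟩
      · intro c
        by_cases h : ∃ b, (a, b) ∈ c.p
        · exact ⟨c, h, le_rfl⟩
        · push Not at h
          obtain ⟨b, hb, hext⟩ := extend hG c.p c.H a true _ (hF.dom c.p c.hp a h)
          refine ⟨⟨insert (a, b) c.p, hb, c.H⟩, ⟨b, by simp⟩, ?_⟩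
          rw [cond_le]
          exact ⟨Finset.subset_insert _ _, subset_rfl, hext _ rfl⟩
    | .inr (.inl b) =>
      refine ⟨?_, ?_⟩
      · rintro p ⟨a, ha⟩ q hpq
        exact ⟨a, hpq.1 ha⟩
      · intro c
        by_cases h : ∃ a, (a, b) ∈ c.p
        · exact ⟨c, h, le_rfl⟩
        · push Not at h
          obtain ⟨a, ha, hext⟩ := extend hG c.p c.H b false _ (hF.ran c.p c.hp b h)
          refine ⟨⟨insert (a, b) c.p, ha, c.H⟩, ⟨a, by simp⟩, ?_⟩
          rw [cond_le]
          exact ⟨Finset.subset_insert _ _, subset_rfl, hext _ rfl⟩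
    | .inr (.inr L) =>
      refine ⟨?_, ?_⟩
      · intro p hp q hpq
        exact hpq.2.1 hp
      · intro c
        refine ⟨⟨c.p, c.hp, insert L c.H⟩, Finset.mem_insert_self _ _, ?_⟩
        rw [cond_le]
        exact ⟨subset_rfl, Finset.subset_insert _ _, fun _ _ => subset_rfl⟩
  have hDcard : Cardinal.mk (Set.range DD) < Cardinal.continuum := by
    refine Cardinal.mk_range_le.trans_lt ?_
    have hc0 : Cardinal.aleph0 ≤ Cardinal.continuum := Cardinal.aleph0_le_continuum
    have hΩ : Cardinal.mk Ω < Cardinal.continuum :=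
      (Cardinal.mk_le_aleph0).trans_lt Cardinal.aleph0_lt_continuum
    have hW : Cardinal.mk (Wd G) < Cardinal.continuum := by
      refine (Cardinal.mk_subtype_le _).trans_lt ?_
      refine (Cardinal.mk_list_le_max _).trans_lt (max_lt Cardinal.aleph0_lt_continuum ?_)
      rw [Cardinal.mk_prod, Cardinal.lift_id, Cardinal.lift_id]
      refine Cardinal.mul_lt_of_lt hc0 hcard ?_
      exact (Cardinal.mk_le_aleph0).trans_lt Cardinal.aleph0_lt_continuum
    rw [Cardinal.mk_sum, Cardinal.lift_id, Cardinal.lift_id, Cardinal.mk_sum, Cardinal.lift_id,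
      Cardinal.lift_id]
    exact Cardinal.add_lt_of_lt hc0 hΩ (Cardinal.add_lt_of_lt hc0 hΩ hW)
  obtain ⟨Q, ⟨c0, hc0⟩, hdir, hdown, hmeet⟩ := hMA (Cond G F) hne hsc (Set.range DD) hDD hDcard
  have hdomQ : ∀ a, ∃ b, ∃ c ∈ Q, (a, b) ∈ c.p := by
    intro a
    obtain ⟨c, hc, b, hb⟩ := hmeet _ ⟨.inl a, rfl⟩
    exact ⟨b, c, hc, hb⟩
  have hranQ : ∀ b, ∃ a, ∃ c ∈ Q, (a, b) ∈ c.p := by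
    intro b
    obtain ⟨c, hc, a, ha⟩ := hmeet _ ⟨.inr (.inl b), rfl⟩
    exact ⟨a, c, hc, ha⟩
  have hfunc : ∀ a b b', (∃ c ∈ Q, (a, b) ∈ c.p) → (∃ c ∈ Q, (a, b') ∈ c.p) → b = b' := by
    rintro a b b' ⟨c, hc, h⟩ ⟨c', hc', h'⟩
    obtain ⟨d, -, h1, h2⟩ := hdir c hc c' hc'
    exact hF.func d.p d.hp a b b' (h1.1 h) (h2.1 h')
  have hinj : ∀ a a' b, (∃ c ∈ Q, (a, b) ∈ c.p) → (∃ c ∈ Q, (a', b) ∈ c.p) → a = a' := by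
    rintro a b b' ⟨c, hc, h⟩ ⟨c', hc', h'⟩
    obtain ⟨d, -, h1, h2⟩ := hdir c hc c' hc'
    exact hF.inj d.p d.hp a b b' (h1.1 h) (h2.1 h')
  choose f hf using hdomQ
  choose g hg using hranQ
  let φ : Equiv.Perm Ω := ⟨f, g, fun a => hinj _ _ _ (hg _) (hf a),
    fun b => hfunc _ _ _ (hf _) (hg b)⟩
  have hφ : ∀ a b, (∃ c ∈ Q, (a, b) ∈ c.p) → φ a = b := fun a b h => hfunc a _ _ (hf a) h
  have hφ' : ∀ a, ∃ c ∈ Q, (a, φ a) ∈ c.p := hf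
  have hbig : ∀ D : Finset Ω, ∀ c ∈ Q, ∃ d ∈ Q, c ≤ d ∧ ∀ a ∈ D, (a, φ a) ∈ d.p := by
    intro D c hc
    induction D using Finset.induction_on with
    | empty => exact ⟨c, hc, le_rfl, by simp⟩
    | insert a D _ ih =>
      obtain ⟨d, hd, hcd, h⟩ := ih
      obtain ⟨d', hd', h'⟩ := hφ' a
      obtain ⟨e, he, h1, h2⟩ := hdir d hd d' hd'
      refine ⟨e, he, hcd.trans h1, ?_⟩
      intro b hb
      rcases Finset.mem_insert.1 hb with rfl | hb
      · exact h2.1 h'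
      · exact h1.1 (h b hb)
  refine ⟨φ, ?_, small_closure hG φ ?_⟩
  · intro D
    obtain ⟨d, hd, -, h⟩ := hbig D c0 hc0
    exact ⟨d.p, d.hp, fun a ha => ⟨_, h a ha⟩, fun a b hab => hφ a b ⟨d, hd, hab⟩⟩
  · intro L hL hred
    obtain ⟨c, hc, hcL⟩ := hmeet _ ⟨.inr (.inr ⟨L, hL, hred⟩), rfl⟩
    have hcL' : (⟨L, hL, hred⟩ : Wd G) ∈ c.H := hcL
    refine (fixW_finite (pE c.p) _ (Finset.finite_toSet _) (fun e u v h => pE_dom c.p e u v h)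
      L hL).subset ?_
    refine (fix_sub φ L).trans ?_
    rintro z ⟨x, hx0, hx⟩
    choose u hu hxu using hx
    obtain ⟨d, hd, hcd, hdom⟩ := hbig ((Finset.range (L.length + 1)).image x ∪
      (Finset.univ : Finset (Fin L.length)).image fun i : Fin L.length => u i.1 i.2) c hc
    refine hcd.2.2 _ hcL' ⟨x, hx0, fun i hi => ⟨u i hi, ?_, hxu i hi⟩⟩
    have h1 := hu i hi
    have hx1 : x ((i + 1) % L.length) ∈ (Finset.range (L.length + 1)).image x ∪
      (Finset.univ : Finset (Fin L.length)).image fun i : Fin L.length => u i.1 i.2 := by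
      refine Finset.mem_union_left _ (Finset.mem_image_of_mem _ ?_)
      rw [Finset.mem_range]
      exact (Nat.mod_lt (i + 1) (Nat.lt_of_le_of_lt (Nat.zero_le _) hi)).trans
        (Nat.lt_succ_self _)
    have hu1 : u i hi ∈ (Finset.range (L.length + 1)).image x ∪
      (Finset.univ : Finset (Fin L.length)).image fun i : Fin L.length => u i.1 i.2 := by
      refine Finset.mem_union_right _ (Finset.mem_image.2 ⟨⟨i, hi⟩, Finset.mem_univ _, rfl⟩)
    have k1 := hdom _ hx1
    have k2 := hdom _ hu1
    generalize (L[i]).2 = e at h1 ⊢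
    cases e
    · change φ _ = _ at h1
      rw [h1] at k2
      exact k2
    · change φ _ = _ at h1
      rw [h1] at k1
      exact k1

theorem good_dense {Ω : Type} [Infinite Ω] [DecidableEq Ω] (h : Equiv.Perm Ω) (S : Finset Ω) :
    Good {p : Finset (Ω × Ω) | (∀ a b c, (a, b) ∈ p → (a, c) ∈ p → b = c) ∧
      (∀ a b c, (a, c) ∈ p → (b, c) ∈ p → a = b) ∧ ∀ a ∈ S, (a, h a) ∈ p} where
  nonempty := by
    refine ⟨S.image fun a => (a, h a), ?_, ?_, ?_⟩
    · intro a b c hb hc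
      simp only [Finset.mem_image, Prod.mk.injEq] at hb hc
      obtain ⟨_, _, rfl, rfl⟩ := hb
      obtain ⟨_, _, rfl, rfl⟩ := hc
      rfl
    · intro a b c hb hc
      simp only [Finset.mem_image, Prod.mk.injEq] at hb hc
      obtain ⟨_, _, rfl, rfl⟩ := hb
      obtain ⟨_, _, rfl, h'⟩ := hc
      exact (h.injective h').symm
    · intro a ha
      exact Finset.mem_image_of_mem (fun a => (a, h a)) ha
  func p hp := hp.1
  inj p hp := hp.2.1
  dom p hp a ha := by
    refine (Set.Finite.infinite_compl (p.image Prod.snd).finite_toSet).mono ?_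
    intro b hb
    have hb' : ∀ c, (c, b) ∉ p := by
      intro c hc
      exact hb (Finset.mem_coe.2 (Finset.mem_image_of_mem Prod.snd hc))
    obtain ⟨h1, h2, h3⟩ := hp
    refine ⟨?_, ?_, fun x hx => Finset.mem_insert_of_mem (h3 x hx)⟩
    · intro x y z hy hz
      simp only [Finset.mem_insert, Prod.mk.injEq] at hy hz
      grind
    · intro x y z hy hz
      simp only [Finset.mem_insert, Prod.mk.injEq] at hy hz
      grind
  ran p hp b hb' := by
    refine (Set.Finite.infinite_compl (p.image Prod.fst).finite_toSet).mono ?_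
    intro a ha
    have ha : ∀ c, (a, c) ∉ p := by
      intro c hc
      exact ha (Finset.mem_coe.2 (Finset.mem_image_of_mem Prod.fst hc))
    obtain ⟨h1, h2, h3⟩ := hp
    refine ⟨?_, ?_, fun x hx => Finset.mem_insert_of_mem (h3 x hx)⟩
    · intro x y z hy hz
      simp only [Finset.mem_insert, Prod.mk.injEq] at hy hz
      grind
    · intro x y z hy hz
      simp only [Finset.mem_insert, Prod.mk.injEq] at hy hz
      grind

theorem good_iso {Ω : Type} [DecidableEq Ω] (h : Equiv.Perm Ω) (A : Set (Equiv.Perm Ω))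
    (F : Set (Set (Ω × Ω))) (hF : FlexibleWitness A F) :
    Good {p : Finset (Ω × Ω) | ∃ f ∈ F, (p : Set (Ω × Ω)) = (fun e => (e.1, h e.2)) '' f} where
  nonempty := ⟨∅, ∅, hF.2.2.1, by simp⟩
  func := by
    rintro p ⟨f, hf, hpf⟩ a b c hb hc
    obtain ⟨k, -, hk⟩ := hF.2.1 f hf
    rw [← Finset.mem_coe, hpf] at hb hc
    obtain ⟨x, hx, hx'⟩ := hb
    obtain ⟨y, hy, hy'⟩ := hc
    simp only [Prod.mk.injEq] at hx' hy'
    rw [← hx'.2, ← hy'.2, ← hk x hx, ← hk y hy, hx'.1, hy'.1]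
  inj := by
    rintro p ⟨f, hf, hpf⟩ a b c hb hc
    obtain ⟨k, -, hk⟩ := hF.2.1 f hf
    rw [← Finset.mem_coe, hpf] at hb hc
    obtain ⟨x, hx, hx'⟩ := hb
    obtain ⟨y, hy, hy'⟩ := hc
    simp only [Prod.mk.injEq] at hx' hy'
    rw [← hx'.1, ← hy'.1]
    apply k.injective
    rw [hk x hx, hk y hy]
    apply h.injective
    rw [hx'.2, hy'.2]
  dom := by
    rintro p ⟨f, hf, hpf⟩ a ha
    have ha' : a ∉ Prod.fst '' f := by
      rintro ⟨x, hx, rfl⟩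
      refine ha (h x.2) ?_
      rw [← Finset.mem_coe, hpf]
      exact ⟨x, hx, rfl⟩
    refine ((hF.2.2.2.2 f hf a ha').image h.injective.injOn).mono ?_
    rintro _ ⟨b, hb, rfl⟩
    refine ⟨_, hb, ?_⟩
    rw [Set.image_insert_eq, Finset.coe_insert, hpf]
  ran := by
    rintro p ⟨f, hf, hpf⟩ b hb
    have hb' : h⁻¹ b ∉ Prod.fst '' (Prod.swap '' f) := by
      rintro ⟨_, ⟨x, hx, rfl⟩, hxb⟩
      refine hb x.1 ?_
      rw [← Finset.mem_coe, hpf]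
      refine ⟨x, hx, ?_⟩
      have : x.2 = h⁻¹ b := hxb
      simp [this]
    refine (hF.2.2.2.2 _ (hF.2.2.2.1 f hf) (h⁻¹ b) hb').mono ?_
    intro a ha
    refine ⟨_, hF.2.2.2.1 _ ha, ?_⟩
    rw [Set.image_insert_eq, Set.image_image, Set.image_insert_eq, Finset.coe_insert, hpf]
    simp

theorem closure_lin {Ω T : Type} [LinearOrder T] (g : T → Equiv.Perm Ω) (S : Set T)
    (k : Equiv.Perm Ω) (hk : k ∈ Subgroup.closure (g '' S)) :
    k = 1 ∨ ∃ s ∈ S, k ∈ Subgroup.closure (g '' Set.Iic s) := by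
  induction hk using Subgroup.closure_induction with
  | mem x hx =>
    obtain ⟨s, hs, rfl⟩ := hx
    exact Or.inr ⟨s, hs, Subgroup.subset_closure ⟨s, le_rfl, rfl⟩⟩
  | one => exact Or.inl rfl
  | mul x y hx hy ihx ihy =>
    rcases ihx with rfl | ⟨s, hs, h1⟩
    · simpa using ihy
    · rcases ihy with rfl | ⟨t, ht, h2⟩
      · exact Or.inr ⟨s, hs, by simpa using h1⟩
      · rcases le_total s t with h | h
        · refine Or.inr ⟨t, ht, mul_mem ?_ h2⟩
          exact Subgroup.closure_mono (Set.image_mono (Set.Iic_subset_Iic.2 h)) h1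
        · refine Or.inr ⟨s, hs, mul_mem h1 ?_⟩
          exact Subgroup.closure_mono (Set.image_mono (Set.Iic_subset_Iic.2 h)) h2
  | inv x hx ih =>
    rcases ih with rfl | ⟨s, hs, h1⟩
    · exact Or.inl inv_one
    · exact Or.inr ⟨s, hs, inv_mem h1⟩

theorem closure_card {Ω : Type} (s : Set (Equiv.Perm Ω))
    (hs : Cardinal.mk s < Cardinal.continuum) :
    Cardinal.mk (Subgroup.closure s) < Cardinal.continuum := by
  have h1 : (FreeGroup.lift (fun x : s => (x : Equiv.Perm Ω))).range = Subgroup.closure s := by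
    rw [FreeGroup.range_lift_eq_closure, Subtype.range_coe]
  rw [← h1]
  have h2 : Cardinal.mk (FreeGroup.lift (fun x : s => (x : Equiv.Perm Ω))).range ≤
      Cardinal.mk (FreeGroup s) :=
    Cardinal.mk_le_of_surjective
      (FreeGroup.lift (fun x : s => (x : Equiv.Perm Ω))).rangeRestrict_surjective
  refine h2.trans_lt ?_
  rcases isEmpty_or_nonempty s with he | he
  · exact (Cardinal.mk_le_aleph0).trans_lt Cardinal.aleph0_lt_continuum
  · rw [Cardinal.mk_freeGroup]
    exact max_lt hs Cardinal.aleph0_lt_continuum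

/-- What a generic permutation for the task `F` over the group `G` satisfies. -/
def Spec {Ω : Type} (G : Subgroup (Equiv.Perm Ω)) (F : Set (Finset (Ω × Ω)))
    (f : Equiv.Perm Ω) : Prop :=
  (∀ D : Finset Ω, ∃ p ∈ F, (∀ d ∈ D, ∃ v, (d, v) ∈ p) ∧ ∀ a b, (a, b) ∈ p → f a = b) ∧
    ∀ k ∈ Subgroup.closure ((G : Set (Equiv.Perm Ω)) ∪ {f}), Small k

/-- The tasks of the transfinite construction. -/
structure Task (Ω : Type) [DecidableEq Ω] : Type where
  F : Set (Finset (Ω × Ω))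
  good : Good F

theorem main {Ω : Type} [Countable Ω] [DecidableEq Ω] (hMA : MASigmaCentered) :
    ∃ G : Subgroup (Equiv.Perm Ω), (∀ k ∈ G, Small k) ∧
      ∀ F : Set (Finset (Ω × Ω)), Good F → ∃ f ∈ G, ∀ D : Finset Ω, ∃ p ∈ F,
        (∀ d ∈ D, ∃ v, (d, v) ∈ p) ∧ ∀ a b, (a, b) ∈ p → f a = b := by
  obtain ⟨lo, wf, hord⟩ := Cardinal.exists_ord_eq_type_lt (Task Ω)
  have hT : Cardinal.mk (Task Ω) ≤ Cardinal.continuum := by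
    have hinj : Function.Injective (Task.F (Ω := Ω)) := by
      rintro ⟨F, h⟩ ⟨F', h'⟩ hFF
      cases hFF
      rfl
    refine (Cardinal.mk_le_of_injective hinj).trans ?_
    rw [Cardinal.mk_set, ← Cardinal.two_power_aleph0]
    exact Cardinal.power_le_power_left two_ne_zero Cardinal.mk_le_aleph0
  let g : Task Ω → Equiv.Perm Ω := (wellFounded_lt (α := Task Ω)).fix fun t rec =>
    Classical.epsilon (Spec (Subgroup.closure {k | ∃ s, ∃ h : s < t, rec s h = k}) t.F)
  have hg : ∀ t, g t = Classical.epsilon (Spec (Subgroup.closure (g '' Set.Iio t)) t.F) := by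
    intro t
    have h1 := (wellFounded_lt (α := Task Ω)).fix_eq (fun t rec =>
      Classical.epsilon (Spec (Subgroup.closure {k | ∃ s, ∃ h : s < t, rec s h = k}) t.F)) t
    have h2 : g '' Set.Iio t = {k | ∃ s, ∃ _ : s < t, g s = k} := by
      ext k
      simp [Set.mem_image]
    rw [h2]
    exact h1
  have hspec : ∀ t, Spec (Subgroup.closure (g '' Set.Iio t)) t.F (g t) := by
    intro t
    induction t using (wellFounded_lt (α := Task Ω)).induction with
    | _ t ih =>
    rw [hg]
    apply Classical.epsilon_spec
    refine step hMA _ ?_ ?_ t.F t.good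
    · apply closure_card
      refine Cardinal.mk_image_le.trans_lt ?_
      exact (Cardinal.mk_Iio_lt t hord).trans_le hT
    · intro k hk
      rcases closure_lin g _ k hk with rfl | ⟨s, hs, hks⟩
      · exact fun h => (h rfl).elim
      · refine (ih s hs).2 k (Subgroup.closure_mono ?_ hks)
        rintro _ ⟨r, hr, rfl⟩
        rcases lt_or_eq_of_le (show r ≤ s from hr) with h | rfl
        · exact Or.inl (Subgroup.subset_closure ⟨r, h, rfl⟩)
        · exact Or.inr rfl
  refine ⟨Subgroup.closure (g '' Set.univ), ?_, ?_⟩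
  · intro k hk
    rcases closure_lin g _ k hk with rfl | ⟨s, hs, hks⟩
    · exact fun h => (h rfl).elim
    · refine (hspec s).2 k (Subgroup.closure_mono ?_ hks)
      rintro _ ⟨r, hr, rfl⟩
      rcases lt_or_eq_of_le (show r ≤ s from hr) with h | rfl
      · exact Or.inl (Subgroup.subset_closure ⟨r, h, rfl⟩)
      · exact Or.inr rfl
  · intro F hF
    exact ⟨g ⟨F, hF⟩, Subgroup.subset_closure ⟨_, Set.mem_univ _, rfl⟩, (hspec ⟨F, hF⟩).1⟩

end FlexProof

/-- (MA(σ-centered)) There is a proper subgroup `G` of `Sym(Ω)` (Ω countably infinite), dense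
in the topology of pointwise convergence, such that for every pair of isomorphic inductively
flexible structures `M, M'` with universe `Ω` some `f ∈ G` is an isomorphism from `M` to `M'`
(in particular `G` acts transitively on the isomorphism class of any inductively flexible
structure). -/
theorem stmt_10 (Ω : Type) [Countable Ω] [Infinite Ω] (hMA : MASigmaCentered) :
    ∃ G : Subgroup (Equiv.Perm Ω), G ≠ ⊤ ∧
      (∀ h : Equiv.Perm Ω, ∀ S : Finset Ω, ∃ g ∈ G, ∀ a ∈ S, g a = h a) ∧
      ∀ (I : Type) (ar : I → ℕ) (M M' : RelStruct Ω I ar),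
        InductivelyFlexible M → InductivelyFlexible M' →
        (∃ g : Equiv.Perm Ω, IsIso g M M') → ∃ f ∈ G, IsIso f M M' := by
  classical
  obtain ⟨G, hG, hgen⟩ := FlexProof.main (Ω := Ω) hMA
  refine ⟨G, ?_, ?_, ?_⟩
  · rintro rfl
    obtain ⟨a, b, hab⟩ := exists_pair_ne Ω
    have h1 : Equiv.swap a b ≠ 1 := by
      intro h
      apply hab
      have h2 : Equiv.swap a b a = a := by rw [h]; rfl
      rw [Equiv.swap_apply_left] at h2
      exact h2.symm
    have h2 := hG (Equiv.swap a b) (Subgroup.mem_top _) h1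
    refine Set.Finite.infinite_compl (Set.toFinite ({a, b} : Set Ω)) (h2.subset ?_)
    intro x hx
    simp only [Set.mem_compl_iff, Set.mem_insert_iff, Set.mem_singleton_iff, not_or] at hx
    exact Equiv.swap_apply_of_ne_of_ne hx.1 hx.2
  · intro h S
    obtain ⟨f, hf, hD⟩ := hgen _ (FlexProof.good_dense h S)
    obtain ⟨p, hp, -, hpf⟩ := hD ∅
    exact ⟨f, hf, fun a ha => hpf a _ (hp.2.2 a ha)⟩
  · rintro I ar M M' ⟨F, hF⟩ - ⟨h, hh⟩
    obtain ⟨f, hf, hD⟩ := hgen _ (FlexProof.good_iso h _ F hF)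
    refine ⟨f, hf, ?_⟩
    intro i t
    obtain ⟨p, ⟨q, hq, hpq⟩, hdom, hpf⟩ := hD (Finset.univ.image t)
    obtain ⟨k, hk, hkq⟩ := hF.2.1 q hq
    have hft : (fun j => f (t j)) = fun j => h (k (t j)) := by
      funext j
      obtain ⟨v, hv⟩ := hdom (t j) (Finset.mem_image_of_mem t (Finset.mem_univ j))
      rw [hpf _ _ hv]
      rw [← Finset.mem_coe, hpq] at hv
      obtain ⟨e, he, hev⟩ := hv
      simp only [Prod.mk.injEq] at hev
      rw [← hev.2, ← hev.1, hkq e he]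
    rw [hft]
    exact (hh i fun j => k (t j)).trans (hk i t)
end

section
/- Assume MA(σ-centered). Then there exists a proper dense subgroup G < Sym(Ω), for Ω countably infinite, acting transitively on the set of ℵ₀-sections of Ω, i.e. partitions of Ω into countably infinitely many infinite pieces, where g ∈ Sym(Ω) sends a partition 𝒫 to {g(A) : A ∈ 𝒫}. -/
/-- An `ℵ₀`-section of `Ω`: a partition of `Ω` into countably infinitely many infinite
pieces. -/
def IsAleph0Section {Ω : Type} (Pp : Set (Set Ω)) : Prop :=
  Pp.Countable ∧ Pp.Infinite ∧ (∀ A ∈ Pp, A.Infinite) ∧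
    (∀ A ∈ Pp, ∀ B ∈ Pp, A ≠ B → Disjoint A B) ∧ ⋃₀ Pp = Set.univ

namespace Neumann

open Cardinal

/-- One step along a partial injection (as a set of pairs), forward or backward. -/
def Step {Ω : Type} (p : Set (Ω × Ω)) (e : Bool) (x y : Ω) : Prop :=
  if e then (x, y) ∈ p else (y, x) ∈ p

/-- Cyclic trajectory of a word. -/
def Traj {Ω I : Type} (σ : Equiv.Perm I) (f : I → Equiv.Perm Ω) (e : I → Bool)
    (p : Set (Ω × Ω)) (x : I → Ω) : Prop :=
  ∀ i, Step p (e i) (x (σ i)) ((f i)⁻¹ (x i))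

lemma Traj.mono {Ω I : Type} {σ : Equiv.Perm I} {f : I → Equiv.Perm Ω} {e : I → Bool}
    {p q : Set (Ω × Ω)} {x : I → Ω} (h : Traj σ f e p x) (hpq : p ⊆ q) : Traj σ f e q x := by
  intro i
  have := h i
  unfold Step at *
  split_ifs at * <;> exact hpq this

lemma traj_insert {Ω I : Type} (σ : Equiv.Perm I) (f : I → Equiv.Perm Ω) (e : I → Bool)
    (hred : ∀ i, e i ≠ e (σ i) → f (σ i) ≠ 1)
    (p : Set (Ω × Ω)) (a b : Ω) (K : Set Ω)
    (hK1 : ∀ u ∈ p, u.1 ∈ K) (hK2 : ∀ u ∈ p, u.2 ∈ K) (hKa : a ∈ K)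
    (h1 : ∀ i, f i b ∉ K) (h2 : ∀ i, (f i)⁻¹ b ∉ K) (h3 : ∀ i, f i ≠ 1 → f i b ≠ b)
    (x : I → Ω) (hx : Traj σ f e (insert (a, b) p) x) : Traj σ f e p x := by
  have hx' := hx
  intro i
  have hi := hx i
  cases he : e i with
  | true =>
    simp only [Step, he, if_true, Set.mem_insert_iff, Prod.mk.injEq] at hi ⊢
    rcases hi with ⟨hi1, hi2⟩ | hi
    · exfalso
      have hxi : x i = f i b := by rw [← hi2]; simp
      have hj := hx (σ.symm i)
      simp only [Equiv.apply_symm_apply] at hj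
      cases hej : e (σ.symm i) with
      | true =>
        simp only [Step, hej, if_true, Set.mem_insert_iff, Prod.mk.injEq] at hj
        rcases hj with ⟨hj, _⟩ | hj
        · exact h1 i (by rw [← hxi, hj]; exact hKa)
        · exact h1 i (by rw [← hxi]; exact hK1 _ hj)
      | false =>
        simp only [Step, hej, Bool.false_eq_true, if_false, Set.mem_insert_iff, Prod.mk.injEq] at hj
        rcases hj with ⟨_, hj⟩ | hj
        · refine h3 i ?_ (by rw [← hxi, hj])
          have := hred (σ.symm i)
          simp only [Equiv.apply_symm_apply] at this
          exact this (by rw [he, hej]; simp)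
        · exact h1 i (by rw [← hxi]; exact hK2 _ hj)
    · exact hi
  | false =>
    simp only [Step, he, Bool.false_eq_true, if_false, Set.mem_insert_iff, Prod.mk.injEq] at hi ⊢
    rcases hi with ⟨hi1, hi2⟩ | hi
    · exfalso
      have hj := hx (σ i)
      rw [hi2] at hj
      cases hej : e (σ i) with
      | true =>
        simp only [Step, hej, if_true, Set.mem_insert_iff, Prod.mk.injEq] at hj
        rcases hj with ⟨_, hj⟩ | hj
        · refine h3 (σ i) (hred i (by rw [he, hej]; simp)) ?_
          rw [Equiv.Perm.inv_eq_iff_eq] at hj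
          exact hj.symm
        · exact h2 (σ i) (hK2 _ hj)
      | false =>
        simp only [Step, hej, Bool.false_eq_true, if_false, Set.mem_insert_iff, Prod.mk.injEq] at hj
        rcases hj with ⟨hj, _⟩ | hj
        · exact h2 (σ i) (by rw [hj]; exact hKa)
        · exact h2 (σ i) (hK1 _ hj)
    · exact hi

lemma traj_swap {Ω I : Type} (σ : Equiv.Perm I) (f : I → Equiv.Perm Ω) (e : I → Bool)
    (p : Set (Ω × Ω)) (x : I → Ω) :
    Traj σ f (fun i => !(e i)) (Prod.swap ⁻¹' p) x ↔ Traj σ f e p x := by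
  unfold Traj Step
  refine forall_congr' fun i => ?_
  cases h : e i <;> simp [h]

/-- Compatible partial injections. -/
def PI {Ω : Type} (c d : Ω → ℕ) (p : Finset (Ω × Ω)) : Prop :=
  ∀ u ∈ p, ∀ v ∈ p, (u.1 = v.1 ↔ u.2 = v.2) ∧ (c u.1 = c v.1 ↔ d u.2 = d v.2)

open Classical in
lemma PI.extend {Ω : Type} {c d : Ω → ℕ} (hd : ∀ n, {x | d x = n}.Infinite)
    {p : Finset (Ω × Ω)} (hp : PI c d p) (a : Ω) (ha : ∀ u ∈ p, u.1 ≠ a) (B : Set Ω)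
    (hB : B.Finite) : ∃ b, b ∉ B ∧ PI c d (insert (a, b) p) := by
  obtain ⟨m, hm⟩ : ∃ m, ∀ u ∈ p, (c u.1 = c a ↔ d u.2 = m) := by
    by_cases h : ∃ u ∈ p, c u.1 = c a
    · obtain ⟨u, hu, hua⟩ := h
      refine ⟨d u.2, fun v hv => ?_⟩
      rw [← hua]
      exact (hp v hv u hu).2
    · push Not at h
      obtain ⟨m, hm⟩ := Infinite.exists_notMem_finset (p.image fun u => d u.2)
      refine ⟨m, fun u hu => ⟨fun h' => absurd h' (h u hu), fun h' => ?_⟩⟩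
      exact absurd (Finset.mem_image.2 ⟨u, hu, h'⟩) hm
  obtain ⟨b, hb, hb'⟩ := (hd m).exists_notMem_finset (hB.toFinset ∪ p.image Prod.snd)
  simp only [Finset.mem_union, Set.Finite.mem_toFinset, Finset.mem_image, not_or, not_exists,
    not_and] at hb'
  simp only [Set.mem_ofPred_eq] at hb
  refine ⟨b, hb'.1, ?_⟩
  intro u hu v hv
  rw [Finset.mem_insert] at hu hv
  rcases hu with rfl | hu <;> rcases hv with rfl | hv
  · simp
  · have h1 := ha v hv
    have h2 := hb'.2 v hv
    have h3 := hm v hv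
    simp only
    rw [hb]
    constructor
    · exact ⟨fun h => absurd h.symm h1, fun h => absurd h.symm h2⟩
    · rw [eq_comm, h3, eq_comm]
  · have h1 := ha u hu
    have h2 := hb'.2 u hu
    have h3 := hm u hu
    simp only
    rw [hb]
    exact ⟨⟨fun h => absurd h h1, fun h => absurd h h2⟩, h3⟩
  · exact hp u hu v hv

/-- Every nonidentity element has finitely many fixed points. -/
def Good {Ω : Type} (u : Equiv.Perm Ω) : Prop := u = 1 ∨ {x | u x = x}.Finite

def Cof {Ω : Type} (G : Subgroup (Equiv.Perm Ω)) : Prop := ∀ u ∈ G, Good u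

lemma Good.comm {Ω : Type} {u v : Equiv.Perm Ω} (h : Good (u * v)) : Good (v * u) := by
  rcases h with h | h
  · left
    exact mul_eq_one_comm.1 h
  · right
    refine (h.preimage (f := u) u.injective.injOn).subset ?_
    intro x hx
    simp only [Set.mem_ofPred_eq, Equiv.Perm.mul_apply, Set.mem_preimage] at hx ⊢
    rw [hx]

/-- Cyclically reduced words. -/
def Red {Ω : Type} {G : Subgroup (Equiv.Perm Ω)} (L : List (G × Bool)) : Prop :=
  ∀ i : Fin L.length, (L.get i).2 ≠ (L.get (finRotate _ i)).2 →
    ((L.get (finRotate _ i)).1 : Equiv.Perm Ω) ≠ 1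

def RWord {Ω : Type} (G : Subgroup (Equiv.Perm Ω)) : Type :=
  {L : List (G × Bool) // Red L ∧ L ≠ []}

def WTraj {Ω : Type} {G : Subgroup (Equiv.Perm Ω)} (L : List (G × Bool))
    (p : Set (Ω × Ω)) (x : Fin L.length → Ω) : Prop :=
  Traj (finRotate L.length) (fun i => ((L.get i).1 : Equiv.Perm Ω)) (fun i => (L.get i).2) p x

open Classical in
/-- Finitely many reduced words: extend the domain. -/
lemma extend_dom {Ω : Type} {G : Subgroup (Equiv.Perm Ω)} (hG : Cof G) {c d : Ω → ℕ}
    (hd : ∀ n, {x | d x = n}.Infinite) {p : Finset (Ω × Ω)} (hp : PI c d p)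
    (W : Finset (RWord G)) (a : Ω) (ha : ∀ u ∈ p, u.1 ≠ a) (fl : Bool) :
    ∃ b, PI c d (insert (a, b) p) ∧ ∀ w ∈ W, ∀ x : Fin w.1.length → Ω,
      Traj (finRotate w.1.length) (fun i => ((w.1.get i).1 : Equiv.Perm Ω))
        (fun i => xor fl (w.1.get i).2) (insert (a, b) (p : Set (Ω × Ω))) x →
      Traj (finRotate w.1.length) (fun i => ((w.1.get i).1 : Equiv.Perm Ω))
        (fun i => xor fl (w.1.get i).2) (p : Set (Ω × Ω)) x := by
  let K : Set Ω := insert a ((Prod.fst '' (p : Set (Ω × Ω))) ∪ (Prod.snd '' (p : Set (Ω × Ω))))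
  have hK : K.Finite := ((p.finite_toSet.image _).union (p.finite_toSet.image _)).insert a
  let B : Set Ω := ⋃ w ∈ W, ⋃ i : Fin w.1.length,
    ((((w.1.get i).1 : Equiv.Perm Ω) ⁻¹' K) ∪ ((((w.1.get i).1 : Equiv.Perm Ω)⁻¹ : Equiv.Perm Ω) ⁻¹' K)) ∪
      {x | ((w.1.get i).1 : Equiv.Perm Ω) ≠ 1 ∧ ((w.1.get i).1 : Equiv.Perm Ω) x = x}
  have hB : B.Finite := by
    refine Set.Finite.biUnion W.finite_toSet fun w _ => Set.finite_iUnion fun i => ?_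
    refine ((hK.preimage (Equiv.injective _).injOn).union
      (hK.preimage (Equiv.injective _).injOn)).union ?_
    rcases hG _ (w.1.get i).1.2 with h | h
    · exact Set.finite_empty.subset fun x hx => hx.1 h
    · exact h.subset fun x hx => hx.2
  obtain ⟨b, hb, hpb⟩ := hp.extend hd a ha B hB
  refine ⟨b, hpb, fun w hw x hx => ?_⟩
  have hb' : ∀ i, ¬ (b ∈ ((((w.1.get i).1 : Equiv.Perm Ω) ⁻¹' K) ∪ ((((w.1.get i).1 : Equiv.Perm Ω)⁻¹ : Equiv.Perm Ω) ⁻¹' K)) ∪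
      {x | ((w.1.get i).1 : Equiv.Perm Ω) ≠ 1 ∧ ((w.1.get i).1 : Equiv.Perm Ω) x = x}) := by
    intro i hi
    exact hb (Set.mem_biUnion hw (Set.mem_iUnion.2 ⟨i, hi⟩))
  refine traj_insert _ _ _ ?_ _ a b K ?_ ?_ ?_ ?_ ?_ ?_ x hx
  · intro i hi
    exact w.2.1 i (fun h => hi (by simp only [h]))
  · intro u hu
    exact Or.inr (Or.inl ⟨u, hu, rfl⟩)
  · intro u hu
    exact Or.inr (Or.inr ⟨u, hu, rfl⟩)
  · exact Or.inl rfl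
  · exact fun i h => hb' i (Or.inl (Or.inl h))
  · exact fun i h => hb' i (Or.inl (Or.inr h))
  · exact fun i h h' => hb' i (Or.inr ⟨h, h'⟩)

open Classical in
lemma extend_ran {Ω : Type} {G : Subgroup (Equiv.Perm Ω)} (hG : Cof G) {c d : Ω → ℕ}
    (hc : ∀ n, {x | c x = n}.Infinite) {p : Finset (Ω × Ω)} (hp : PI c d p)
    (W : Finset (RWord G)) (b : Ω) (hb : ∀ u ∈ p, u.2 ≠ b) :
    ∃ a, PI c d (insert (a, b) p) ∧ ∀ w ∈ W, ∀ x : Fin w.1.length → Ω,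
      WTraj w.1 (insert (a, b) (p : Set (Ω × Ω))) x → WTraj w.1 (p : Set (Ω × Ω)) x := by
  have hsw : ∀ q : Finset (Ω × Ω), PI c d q → PI d c (q.image Prod.swap) := by
    intro q hq u hu v hv
    simp only [Finset.mem_image] at hu hv
    obtain ⟨u, hu, rfl⟩ := hu
    obtain ⟨v, hv, rfl⟩ := hv
    exact ⟨(hq u hu v hv).1.symm, (hq u hu v hv).2.symm⟩
  obtain ⟨a, ha, h⟩ := extend_dom hG hc (hsw p hp) W b (by
    intro u hu
    simp only [Finset.mem_image] at hu
    obtain ⟨u, hu, rfl⟩ := hu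
    exact hb u hu) true
  have hset : ((p.image Prod.swap : Finset (Ω × Ω)) : Set (Ω × Ω)) = Prod.swap ⁻¹' (p : Set (Ω × Ω)) := by
    ext ⟨x, y⟩
    simp
  have hset' : insert (b, a) (Prod.swap ⁻¹' (p : Set (Ω × Ω))) =
      Prod.swap ⁻¹' (insert (a, b) (p : Set (Ω × Ω))) := by
    ext ⟨x, y⟩
    simp [and_comm]
  refine ⟨a, ?_, fun w hw x hx => ?_⟩
  · intro u hu v hv
    have := ha u.swap (by
      rw [Finset.mem_insert] at hu ⊢
      rcases hu with rfl | hu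
      · exact Or.inl rfl
      · exact Or.inr (Finset.mem_image_of_mem _ hu)) v.swap (by
      rw [Finset.mem_insert] at hv ⊢
      rcases hv with rfl | hv
      · exact Or.inl rfl
      · exact Or.inr (Finset.mem_image_of_mem _ hv))
    exact ⟨this.1.symm, this.2.symm⟩
  · have h' := h w hw x
    rw [hset, hset'] at h'
    simp only [Bool.true_xor] at h'
    rw [traj_swap, traj_swap] at h'
    exact h' hx

/-- Forcing conditions. -/
structure Cond {Ω : Type} (G : Subgroup (Equiv.Perm Ω)) (c d : Ω → ℕ)
    (p0 : Finset (Ω × Ω)) : Type where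
  p : Finset (Ω × Ω)
  W : Finset (RWord G)
  pi : PI c d p
  sub : p0 ⊆ p

instance {Ω : Type} (G : Subgroup (Equiv.Perm Ω)) (c d : Ω → ℕ) (p0 : Finset (Ω × Ω)) :
    Preorder (Cond G c d p0) where
  le q r := q.p ⊆ r.p ∧ q.W ⊆ r.W ∧ ∀ w ∈ q.W, ∀ x, WTraj w.1 (r.p : Set (Ω × Ω)) x →
    WTraj w.1 (q.p : Set (Ω × Ω)) x
  le_refl q := ⟨subset_rfl, subset_rfl, fun _ _ _ h => h⟩
  le_trans q r s h1 h2 := ⟨h1.1.trans h2.1, h1.2.1.trans h2.2.1,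
    fun w hw x hx => h1.2.2 w hw x (h2.2.2 w (h1.2.1 hw) x hx)⟩

lemma Cond.le_def {Ω : Type} {G : Subgroup (Equiv.Perm Ω)} {c d : Ω → ℕ} {p0 : Finset (Ω × Ω)}
    {q r : Cond G c d p0} : q ≤ r ↔ q.p ⊆ r.p ∧ q.W ⊆ r.W ∧
    ∀ w ∈ q.W, ∀ x, WTraj w.1 (r.p : Set (Ω × Ω)) x →
    WTraj w.1 (q.p : Set (Ω × Ω)) x := Iff.rfl

open Classical in
lemma sigmaCentered {Ω : Type} [Countable Ω] (G : Subgroup (Equiv.Perm Ω)) (c d : Ω → ℕ)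
    (p0 : Finset (Ω × Ω)) (h0 : PI c d p0) : SigmaCentered (Cond G c d p0) := by
  obtain ⟨en, hen⟩ := exists_injective_nat (Finset (Ω × Ω))
  refine ⟨fun n => {q | en q.p = n}, fun n S hS => ?_, ?_⟩
  · rcases S.eq_empty_or_nonempty with rfl | ⟨q, hq⟩
    · exact ⟨⟨p0, ∅, h0, subset_rfl⟩, by simp⟩
    · refine ⟨⟨q.p, S.biUnion Cond.W, q.pi, q.sub⟩, fun r hr => ?_⟩
      have : r.p = q.p := hen ((hS hr).trans (hS hq).symm)
      refine ⟨this.subset, Finset.subset_biUnion_of_mem Cond.W hr, fun w _ x hx => ?_⟩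
      simp only at hx
      rw [this]
      exact hx
  · ext q
    simp

/-- The generic permutation. -/
lemma exists_generic {Ω : Type} [Countable Ω] (hMA : MASigmaCentered)
    {G : Subgroup (Equiv.Perm Ω)} (hG : Cof G) (hcard : #G < 𝔠) {c d : Ω → ℕ}
    (hc : ∀ n, {x | c x = n}.Infinite) (hd : ∀ n, {x | d x = n}.Infinite)
    (p0 : Finset (Ω × Ω)) (h0 : PI c d p0) :
    ∃ g : Equiv.Perm Ω, (∀ u ∈ p0, g u.1 = u.2) ∧ (∀ x y, c x = c y ↔ d (g x) = d (g y)) ∧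
      ∀ w : RWord G, ∃ F : Set Ω, F.Finite ∧ ∀ x, WTraj w.1 {u | g u.1 = u.2} x →
        ∀ i, x i ∈ F := by
  classical
  let D : Ω ⊕ Ω ⊕ RWord G → Set (Cond G c d p0) := fun s => match s with
    | Sum.inl a => {q | ∃ u ∈ q.p, u.1 = a}
    | Sum.inr (Sum.inl b) => {q | ∃ u ∈ q.p, u.2 = b}
    | Sum.inr (Sum.inr w) => {q | w ∈ q.W}
  have hDcard : #(Set.range D) < 𝔠 := by
    refine mk_range_le.trans_lt ?_
    simp only [mk_sum, lift_id]
    have hΩ : #Ω < 𝔠 := (mk_le_aleph0 (α := Ω)).trans_lt aleph0_lt_continuum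
    refine add_lt_of_lt aleph0_le_continuum hΩ (add_lt_of_lt aleph0_le_continuum hΩ ?_)
    refine (mk_subtype_le _).trans_lt ((mk_list_le_max _).trans_lt ?_)
    refine max_lt aleph0_lt_continuum ?_
    simp only [mk_prod, lift_id]
    exact mul_lt_of_lt aleph0_le_continuum hcard
      ((mk_le_aleph0 (α := Bool)).trans_lt aleph0_lt_continuum)
  obtain ⟨Q, hQne, hQdir, -, hQD⟩ := hMA (Cond G c d p0) ⟨⟨p0, ∅, h0, subset_rfl⟩⟩
    (sigmaCentered G c d p0 h0) (Set.range D) (by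
      rintro _ ⟨s, rfl⟩
      rcases s with a | b | w
      · refine ⟨?_, ?_⟩
        · rintro q ⟨u, hu, hua⟩ r hqr
          exact ⟨u, hqr.1 hu, hua⟩
        · intro q
          by_cases h : ∃ u ∈ q.p, u.1 = a
          · exact ⟨q, h, le_rfl⟩
          · push Not at h
            obtain ⟨b, hb, hW⟩ := extend_dom hG hd q.pi q.W a h false
            refine ⟨⟨insert (a, b) q.p, q.W, hb, q.sub.trans (Finset.subset_insert _ _)⟩,
              ⟨(a, b), Finset.mem_insert_self _ _, rfl⟩, Finset.subset_insert _ _, subset_rfl, ?_⟩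
            intro w hw x hx
            have := hW w hw x
            simp only [Bool.false_xor] at this
            refine this ?_
            simp only [Finset.coe_insert] at hx
            exact hx
      · refine ⟨?_, ?_⟩
        · rintro q ⟨u, hu, hua⟩ r hqr
          exact ⟨u, hqr.1 hu, hua⟩
        · intro q
          by_cases h : ∃ u ∈ q.p, u.2 = b
          · exact ⟨q, h, le_rfl⟩
          · push Not at h
            obtain ⟨a, ha, hW⟩ := extend_ran hG hc q.pi q.W b h
            refine ⟨⟨insert (a, b) q.p, q.W, ha, q.sub.trans (Finset.subset_insert _ _)⟩,
              ⟨(a, b), Finset.mem_insert_self _ _, rfl⟩, Finset.subset_insert _ _, subset_rfl, ?_⟩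
            intro w hw x hx
            refine hW w hw x ?_
            simpa only [Finset.coe_insert] using hx
      · refine ⟨?_, ?_⟩
        · intro q hq r hqr
          exact hqr.2.1 hq
        · intro q
          exact ⟨⟨q.p, insert w q.W, q.pi, q.sub⟩, Finset.mem_insert_self _ _, subset_rfl,
            Finset.subset_insert _ _, fun _ _ _ h => h⟩) hDcard
  have hdom : ∀ a, ∃ b, ∃ q ∈ Q, (a, b) ∈ q.p := by
    intro a
    obtain ⟨q, hq, ⟨u, hu, rfl⟩⟩ := hQD (D (Sum.inl a)) (Set.mem_range_self (f := D) (Sum.inl a))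
    exact ⟨u.2, q, hq, hu⟩
  have hran : ∀ b, ∃ a, ∃ q ∈ Q, (a, b) ∈ q.p := by
    intro b
    obtain ⟨q, hq, ⟨u, hu, rfl⟩⟩ := hQD (D (Sum.inr (Sum.inl b))) (Set.mem_range_self (f := D) (Sum.inr (Sum.inl b)))
    exact ⟨u.1, q, hq, hu⟩
  have hpi : ∀ u v : Ω × Ω, (∃ q ∈ Q, u ∈ q.p) → (∃ q ∈ Q, v ∈ q.p) →
      (u.1 = v.1 ↔ u.2 = v.2) ∧ (c u.1 = c v.1 ↔ d u.2 = d v.2) := by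
    rintro u v ⟨q, hq, hu⟩ ⟨r, hr, hv⟩
    obtain ⟨s, hs, h1, h2⟩ := hQdir q hq r hr
    exact s.pi u (h1.1 hu) v (h2.1 hv)
  choose g0 hg0 using hdom
  have hbij : Function.Bijective g0 := by
    refine ⟨fun x y hxy => (hpi _ _ (hg0 x) (hg0 y)).1.2 hxy, fun b => ?_⟩
    obtain ⟨a, ha⟩ := hran b
    exact ⟨a, (hpi _ _ (hg0 a) ha).1.1 rfl⟩
  refine ⟨Equiv.ofBijective g0 hbij, ?_, ?_, ?_⟩
  · intro u hu
    obtain ⟨q, hq⟩ := hQne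
    exact (hpi _ u (hg0 u.1) ⟨q, hq, q.sub hu⟩).1.1 rfl
  · intro x y
    exact (hpi _ _ (hg0 x) (hg0 y)).2
  · intro w
    obtain ⟨q0, hq0, hw⟩ := hQD (D (Sum.inr (Sum.inr w))) (Set.mem_range_self (f := D) (Sum.inr (Sum.inr w)))
    change w ∈ q0.W at hw
    let K : Set Ω := (Prod.fst '' (q0.p : Set (Ω × Ω))) ∪ (Prod.snd '' (q0.p : Set (Ω × Ω)))
    have hK : K.Finite := (q0.p.finite_toSet.image _).union (q0.p.finite_toSet.image _)
    refine ⟨⋃ i : Fin w.1.length, ((w.1.get i).1 : Equiv.Perm Ω) '' K,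
      Set.finite_iUnion fun i => hK.image _, fun x hx => ?_⟩
    have hgr : ∀ u : Ω × Ω, g0 u.1 = u.2 → ∃ r ∈ Q, u ∈ (r.p : Set (Ω × Ω)) := by
      rintro ⟨a, b⟩ h
      simp only at h
      rw [← h]
      exact hg0 a
    have hfin : ∀ J : Finset (Fin w.1.length), ∃ q ∈ Q, q0 ≤ q ∧ ∀ i ∈ J,
        Step (q.p : Set (Ω × Ω)) (w.1.get i).2 (x (finRotate _ i))
          (((w.1.get i).1 : Equiv.Perm Ω)⁻¹ (x i)) := by
      intro J
      induction J using Finset.induction_on with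
      | empty => exact ⟨q0, hq0, le_rfl, by simp⟩
      | insert i J _ ih =>
        obtain ⟨q, hq, hle, hJ⟩ := ih
        have hi : ∃ r ∈ Q, Step (r.p : Set (Ω × Ω)) (w.1.get i).2 (x (finRotate _ i))
          (((w.1.get i).1 : Equiv.Perm Ω)⁻¹ (x i)) := by
          have := hx i
          unfold Step at this ⊢
          split_ifs at this ⊢ with he
          · exact hgr _ this
          · exact hgr _ this
        obtain ⟨r, hr, hir⟩ := hi
        obtain ⟨s, hs, hqs, hrs⟩ := hQdir q hq r hr
        have hmono : ∀ {t : Cond G c d p0} {e : Bool} {y z : Ω}, t ≤ s →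
            Step (t.p : Set (Ω × Ω)) e y z → Step (s.p : Set (Ω × Ω)) e y z := by
          intro t e y z hts h
          unfold Step at h ⊢
          split_ifs at h ⊢ <;> exact hts.1 h
        refine ⟨s, hs, hle.trans hqs, fun j hj => ?_⟩
        rcases Finset.mem_insert.1 hj with rfl | hj
        · exact hmono hrs hir
        · exact hmono hqs (hJ j hj)
    obtain ⟨q, hq, hle, hJ⟩ := hfin Finset.univ
    have ht : WTraj w.1 (q0.p : Set (Ω × Ω)) x :=
      hle.2.2 w hw x fun i => hJ i (Finset.mem_univ i)
    intro i
    refine Set.mem_iUnion.2 ⟨i, (((w.1.get i).1 : Equiv.Perm Ω)⁻¹ (x i)), ?_, by simp⟩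
    have := ht i
    unfold Step at this
    split_ifs at this
    · exact Or.inr ⟨_, this, rfl⟩
    · exact Or.inl ⟨_, this, rfl⟩

/-- Value of a letter. -/
def M {Ω : Type} {G : Subgroup (Equiv.Perm Ω)} (g : Equiv.Perm Ω) (l : G × Bool) :
    Equiv.Perm Ω := (l.1 : Equiv.Perm Ω) * (if l.2 then g else g⁻¹)

lemma val_finRotate {n : ℕ} (i : Fin n) : ((finRotate n i : Fin n) : ℕ) = (i + 1) % n := by
  cases n with
  | zero => exact i.elim0
  | succ n => rw [finRotate_apply, Fin.val_add]; simp

lemma exists_traj {Ω : Type} {G : Subgroup (Equiv.Perm Ω)} (g : Equiv.Perm Ω)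
    (L : List (G × Bool)) (hL : L ≠ []) (y : Ω) (hy : (L.map (M g)).prod y = y) :
    ∃ x : Fin L.length → Ω, WTraj L {u | g u.1 = u.2} x ∧ ∃ i, x i = y := by
  have hpos : 0 < L.length := List.length_pos_iff.2 hL
  let x : Fin L.length → Ω := fun i => (((L.take i).map (M g)).prod)⁻¹ y
  have key : ∀ i, x i = M g (L.get i) (x (finRotate _ i)) := by
    intro i
    have h1 : (((L.take (i + 1)).map (M g)).prod) = ((L.take i).map (M g)).prod * M g (L.get i) := by
      rw [List.take_succ_eq_append_getElem i.2]
      simp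
    have h2 : x (finRotate _ i) = (((L.take (i + 1)).map (M g)).prod)⁻¹ y := by
      simp only [x]
      rw [val_finRotate]
      rcases Nat.lt_or_ge (i + 1) L.length with h | h
      · rw [Nat.mod_eq_of_lt h]
      · have h' : (i : ℕ) + 1 = L.length := le_antisymm i.2 h
        rw [h', Nat.mod_self, List.take_length]
        simp only [List.take_zero, List.map_nil, List.prod_nil, inv_one, Equiv.Perm.one_apply]
        rw [Equiv.Perm.eq_inv_iff_eq]
        exact hy
    rw [h2, h1, mul_inv_rev, Equiv.Perm.mul_apply]
    exact ((M g (L.get i)).apply_symm_apply _).symm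
  refine ⟨x, ?_, ⟨0, hpos⟩, by simp only [x, List.take_zero, List.map_nil, List.prod_nil, inv_one, Equiv.Perm.one_apply]⟩
  intro i
  have hk : ((L.get i).1 : Equiv.Perm Ω)⁻¹ (x i) =
      (if (L.get i).2 then g else g⁻¹) (x (finRotate _ i)) := by
    rw [Equiv.Perm.inv_eq_iff_eq]
    rw [key i]
    rfl
  simp only [hk]
  unfold Step
  split_ifs <;> simp

lemma good_word {Ω : Type} {G : Subgroup (Equiv.Perm Ω)} (hG : Cof G) (g : Equiv.Perm Ω)
    (hg : ∀ w : RWord G, ∃ F : Set Ω, F.Finite ∧ ∀ x, WTraj w.1 {u | g u.1 = u.2} x →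
        ∀ i, x i ∈ F) :
    ∀ (n : ℕ) (L : List (G × Bool)), L.length = n → ∀ k : G,
      Good ((k : Equiv.Perm Ω) * (L.map (M g)).prod) := by
  intro n
  induction n using Nat.strong_induction_on with
  | _ n ih =>
  intro L hLn k
  rcases L with _ | ⟨l, t⟩
  · simpa using hG k k.2
  have hprod : (k : Equiv.Perm Ω) * (((l :: t).map (M g)).prod) =
      ((((k * l.1, l.2) : G × Bool) :: t).map (M g)).prod := by
    simp [M, mul_assoc]
  rw [hprod]
  generalize hL : (((k * l.1, l.2) : G × Bool) :: t) = L
  have hLn' : L.length = n := by rw [← hL, ← hLn]; simp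
  have hne : L ≠ [] := by rw [← hL]; simp
  clear hL hprod
  by_cases hred : Red L
  · obtain ⟨F, hF, hx⟩ := hg ⟨L, hred, hne⟩
    right
    refine hF.subset fun y hy => ?_
    obtain ⟨x, hxt, i, rfl⟩ := exists_traj g L hne y hy
    exact hx x hxt i
  · unfold Red at hred
    push Not at hred
    obtain ⟨i, hi, h1⟩ := hred
    have hrot : ∃ a b s, L.rotate i = a :: b :: s ∧ a = L.get i ∧ b = L.get (finRotate _ i) := by
      have h2 : 2 ≤ L.length := by
        by_contra hlt
        have hi2 := i.2
        have : finRotate _ i = i := by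
          apply Fin.ext
          have := (finRotate _ i).2
          omega
        rw [this] at hi
        exact hi rfl
      have hlen : (L.rotate i).length = L.length := List.length_rotate _ _
      have e0 := List.getElem_rotate L i 0 (by omega)
      have e1 := List.getElem_rotate L i 1 (by omega)
      have hv := val_finRotate i
      rcases hRe : L.rotate i with _ | ⟨a, _ | ⟨b, s⟩⟩
      · rw [hRe] at hlen; simp at hlen; omega
      · rw [hRe] at hlen; simp at hlen; omega
      · refine ⟨a, b, s, rfl, ?_, ?_⟩
        · simp only [hRe, List.getElem_cons_zero] at e0
          rw [e0]
          simp only [List.get_eq_getElem, zero_add]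
          congr 1
          exact Nat.mod_eq_of_lt i.2
        · simp only [hRe, List.getElem_cons_succ, List.getElem_cons_zero] at e1
          rw [e1]
          simp only [List.get_eq_getElem, hv]
          congr 2
          omega
    obtain ⟨a, b, s, hR, ha, hb⟩ := hrot
    rw [← ha, ← hb] at hi
    rw [← hb] at h1
    have hlen : s.length + 2 = n := by
      rw [← hLn', ← List.length_rotate L i, hR]; simp
    have hgood := ih s.length (by omega) s rfl a.1
    have hab : (((a :: b :: s).map (M g)).prod) = (a.1 : Equiv.Perm Ω) * (s.map (M g)).prod := by
      simp only [List.map_cons, List.prod_cons, M, h1, one_mul]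
      rw [← mul_assoc]
      congr 1
      rw [mul_assoc]
      cases ha2 : a.2 <;> cases hb2 : b.2 <;> simp_all
    rw [← hab, ← hR, List.rotate_eq_drop_append_take i.2.le, List.map_append, List.prod_append] at hgood
    have := hgood.comm
    rwa [← List.prod_append, ← List.map_append, List.take_append_drop] at this

lemma cof_closure {Ω : Type} {G : Subgroup (Equiv.Perm Ω)} (hG : Cof G) (g : Equiv.Perm Ω)
    (hg : ∀ w : RWord G, ∃ F : Set Ω, F.Finite ∧ ∀ x, WTraj w.1 {u | g u.1 = u.2} x →
        ∀ i, x i ∈ F) : Cof (Subgroup.closure (insert g (G : Set (Equiv.Perm Ω)))) := by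
  intro u hu
  have hrep : ∃ (L : List (G × Bool)) (k : G), u = (L.map (M g)).prod * k := by
    have hG' : ∀ (y : G) (v : Equiv.Perm Ω),
        (∃ (L : List (G × Bool)) (k : G), v = (L.map (M g)).prod * k) →
        (∃ (L : List (G × Bool)) (k : G), y * v = (L.map (M g)).prod * k) := by
      rintro y v ⟨L, k, rfl⟩
      rcases L with _ | ⟨l, t⟩
      · exact ⟨[], y * k, by simp⟩
      · exact ⟨(y * l.1, l.2) :: t, k, by simp [M, mul_assoc]⟩
    induction hu using Subgroup.closure_induction_left with
    | one => exact ⟨[], 1, by simp⟩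
    | mul_left y hy v _ ih =>
      rcases hy with rfl | hy
      · obtain ⟨L, k, rfl⟩ := ih
        exact ⟨(1, true) :: L, k, by simp [M, mul_assoc]⟩
      · exact hG' ⟨y, hy⟩ v ih
    | inv_mul_cancel y hy v _ ih =>
      rcases hy with rfl | hy
      · obtain ⟨L, k, rfl⟩ := ih
        exact ⟨(1, false) :: L, k, by simp [M, mul_assoc]⟩
      · exact hG' (⟨y, hy⟩⁻¹) v ih
  obtain ⟨L, k, rfl⟩ := hrep
  exact (good_word hG g hg _ L rfl k).comm

lemma mk_closure_lt {Ω : Type} (s : Set (Equiv.Perm Ω)) (hs : #s < 𝔠) :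
    #(Subgroup.closure s) < 𝔠 := by
  have h : #(Subgroup.closure s) ≤ #(List (s × Bool)) := by
    let φ : List (s × Bool) → Equiv.Perm Ω := fun l =>
      (l.map fun a => if a.2 then (a.1 : Equiv.Perm Ω) else (a.1 : Equiv.Perm Ω)⁻¹).prod
    have hsub : (Subgroup.closure s : Set (Equiv.Perm Ω)) ⊆ Set.range φ := by
      intro u hu
      induction hu using Subgroup.closure_induction_left with
      | one => exact ⟨[], by simp [φ]⟩
      | mul_left y hy v _ ih =>
        obtain ⟨l, rfl⟩ := ih
        exact ⟨(⟨y, hy⟩, true) :: l, by simp [φ]⟩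
      | inv_mul_cancel y hy v _ ih =>
        obtain ⟨l, rfl⟩ := ih
        exact ⟨(⟨y, hy⟩, false) :: l, by simp [φ]⟩
    exact (mk_le_mk_of_subset hsub).trans mk_range_le
  refine h.trans_lt ((mk_list_le_max _).trans_lt (max_lt aleph0_lt_continuum ?_))
  simp only [mk_prod, lift_id]
  exact mul_lt_of_lt aleph0_le_continuum hs
      ((mk_le_aleph0 (α := Bool)).trans_lt aleph0_lt_continuum)

/-- What a permutation has to do at stage `(h, S)`. -/
def Task {Ω : Type} (c : Ω → ℕ) (t : Equiv.Perm Ω × Finset Ω) (g : Equiv.Perm Ω) : Prop :=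
  (∀ a ∈ t.2, g a = t.1 a) ∧ ∀ x y, c x = c y ↔ c (t.1⁻¹ (g x)) = c (t.1⁻¹ (g y))

lemma exists_task {Ω : Type} [Countable Ω] (hMA : MASigmaCentered)
    {c : Ω → ℕ} (hc : ∀ n, {x | c x = n}.Infinite)
    (s : Set (Equiv.Perm Ω)) (hs : #s < 𝔠) (hcof : Cof (Subgroup.closure s))
    (t : Equiv.Perm Ω × Finset Ω) :
    ∃ g, Task c t g ∧ Cof (Subgroup.closure (insert g s)) := by
  classical
  obtain ⟨h, S⟩ := t
  have hd : ∀ n, {x | c (h⁻¹ x) = n}.Infinite := by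
    intro n
    exact (hc n).preimage (f := (h⁻¹ : Equiv.Perm Ω))
      (by rw [(Equiv.surjective _).range_eq]; exact Set.subset_univ _)
  obtain ⟨g, hg1, hg2, hg3⟩ := exists_generic hMA hcof (mk_closure_lt s hs) hc hd
    (S.image fun a => (a, h a)) (by
      intro u hu v hv
      simp only [Finset.mem_image] at hu hv
      obtain ⟨a, _, rfl⟩ := hu
      obtain ⟨b, _, rfl⟩ := hv
      simp)
  refine ⟨g, ⟨fun a ha => hg1 (a, h a) (Finset.mem_image_of_mem _ ha), hg2⟩, ?_⟩
  intro u hu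
  refine cof_closure hcof g hg3 u (Subgroup.closure_mono ?_ hu)
  exact Set.insert_subset_insert Subgroup.subset_closure

lemma mem_closure_image {T Ω : Type} [LinearOrder T] (γ : T → Equiv.Perm Ω) (A : Set T)
    (u : Equiv.Perm Ω) (hu : u ∈ Subgroup.closure (γ '' A)) :
    u = 1 ∨ ∃ s ∈ A, u ∈ Subgroup.closure (γ '' Set.Iic s) := by
  induction hu using Subgroup.closure_induction with
  | one => exact Or.inl rfl
  | mem x hx =>
    obtain ⟨s, hs, rfl⟩ := hx
    exact Or.inr ⟨s, hs, Subgroup.subset_closure ⟨s, le_rfl, rfl⟩⟩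
  | mul x y _ _ hx hy =>
    rcases hx with rfl | ⟨s, hs, hx⟩
    · simpa using hy
    rcases hy with rfl | ⟨r, hr, hy⟩
    · exact Or.inr ⟨s, hs, by simpa using hx⟩
    right
    rcases le_total s r with h | h
    · exact ⟨r, hr, mul_mem (Subgroup.closure_mono
        (Set.image_mono (Set.Iic_subset_Iic.2 h)) hx) hy⟩
    · exact ⟨s, hs, mul_mem hx (Subgroup.closure_mono
        (Set.image_mono (Set.Iic_subset_Iic.2 h)) hy)⟩
  | inv x _ hx =>
    rcases hx with rfl | ⟨s, hs, hx⟩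
    · simp
    · exact Or.inr ⟨s, hs, inv_mem hx⟩

lemma exists_group {Ω : Type} [Countable Ω] [Infinite Ω] (hMA : MASigmaCentered)
    {c : Ω → ℕ} (hc : ∀ n, {x | c x = n}.Infinite) :
    ∃ G : Subgroup (Equiv.Perm Ω), Cof G ∧ ∀ t, ∃ g ∈ G, Task c t g := by
  classical
  let T := (𝔠 : Cardinal.{0}).ord.ToType
  have hT : #T = 𝔠 := by simp [T]
  have htask : #(Equiv.Perm Ω × Finset Ω) ≤ #T := by
    rw [hT, mk_prod, lift_id, lift_id, mk_perm_eq_two_power, mk_finset_of_infinite,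
      mk_eq_aleph0 Ω, two_power_aleph0]
    exact mul_le_of_le aleph0_le_continuum le_rfl aleph0_le_continuum
  obtain ⟨ι⟩ := htask
  let τ : T → Equiv.Perm Ω × Finset Ω := Function.invFun ι
  have hτ : Function.Surjective τ := Function.invFun_surjective ι.injective
  let step : (t : T) → ((s : T) → s < t → Equiv.Perm Ω) → Equiv.Perm Ω := fun t ih =>
    if h : ∃ g, Task c (τ t) g ∧
      Cof (Subgroup.closure (insert g {u | ∃ s, ∃ hs : s < t, ih s hs = u}))
    then h.choose else 1
  let γ : T → Equiv.Perm Ω := WellFounded.fix (wellFounded_lt (α := T)) step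
  have hγ : ∀ t, γ t = step t (fun s _ => γ s) := fun t => WellFounded.fix_eq _ _ _
  have hset : ∀ t, {u | ∃ s, ∃ _ : s < t, γ s = u} = γ '' Set.Iio t := by
    intro t
    ext u
    simp
  have hstep : ∀ t, Cof (Subgroup.closure (γ '' Set.Iio t)) →
      Task c (τ t) (γ t) ∧ Cof (Subgroup.closure (γ '' Set.Iic t)) := by
    intro t ht
    have hex : ∃ g, Task c (τ t) g ∧
      Cof (Subgroup.closure (insert g {u | ∃ s, ∃ _ : s < t, γ s = u})) := by
      rw [hset]
      exact exists_task hMA hc _ (mk_image_le.trans_lt (mk_Iio_toType_ord_lt t)) ht (τ t)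
    have hval : γ t = hex.choose := by
      rw [hγ t]
      exact dif_pos hex
    have hspec := hex.choose_spec
    rw [← hval, hset, ← Set.image_insert_eq, Set.Iio_insert] at hspec
    exact hspec
  have hall : ∀ t, Cof (Subgroup.closure (γ '' Set.Iio t)) := by
    intro t
    induction t using WellFoundedLT.induction with
    | _ t ih =>
    intro u hu
    rcases mem_closure_image γ _ u hu with rfl | ⟨s, hs, hu⟩
    · exact Or.inl rfl
    · exact (hstep s (ih s hs)).2 u hu
  refine ⟨Subgroup.closure (γ '' Set.univ), ?_, ?_⟩
  · intro u hu
    rcases mem_closure_image γ _ u hu with rfl | ⟨s, hs, hu⟩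
    · exact Or.inl rfl
    · exact (hstep s (hall s)).2 u hu
  · intro t
    obtain ⟨s, rfl⟩ := hτ t
    exact ⟨γ s, Subgroup.subset_closure ⟨s, trivial, rfl⟩, (hstep s (hall s)).1⟩

/-- The standard section. -/
def P0 {Ω : Type} (c : Ω → ℕ) : Set (Set Ω) := Set.range fun n => {x | c x = n}

lemma image_P0 {Ω : Type} {c : Ω → ℕ} (hc : ∀ n, {x | c x = n}.Infinite) (s : Equiv.Perm Ω)
    (hs : ∀ x y, c x = c y ↔ c (s x) = c (s y)) :
    (fun A : Set Ω => s '' A) '' P0 c = P0 c := by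
  have key : ∀ x, s '' {y | c y = c x} = {y | c y = c (s x)} := by
    intro x
    ext y
    simp only [Set.mem_image, Set.mem_ofPred_eq]
    constructor
    · rintro ⟨z, hz, rfl⟩
      exact (hs z x).1 hz
    · intro hy
      exact ⟨s.symm y, (hs _ _).2 (by simpa using hy), by simp⟩
  ext A
  constructor
  · rintro ⟨_, ⟨n, rfl⟩, rfl⟩
    obtain ⟨x, rfl⟩ := (hc n).nonempty
    exact ⟨c (s x), (key x).symm⟩
  · rintro ⟨n, rfl⟩
    obtain ⟨x, rfl⟩ := (hc n).nonempty
    refine ⟨_, ⟨c (s.symm x), rfl⟩, ?_⟩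
    simp only
    rw [key]
    simp

lemma exists_perm_section {Ω : Type} [Countable Ω] {c : Ω → ℕ}
    (hc : ∀ n, {x | c x = n}.Infinite) (P : Set (Set Ω)) (hP : IsAleph0Section P) :
    ∃ k : Equiv.Perm Ω, (fun A : Set Ω => k '' A) '' P0 c = P := by
  obtain ⟨hP1, hP2, hP3, hP4, hP5⟩ := hP
  have := hP1.to_subtype
  have := hP2.to_subtype
  obtain ⟨e⟩ : Nonempty (ℕ ≃ P) := ⟨(Classical.choice (nonempty_denumerable P)).eqv.symm⟩
  have hfib : ∀ n, Nonempty ({x | c x = n} ≃ ((e n : Set Ω))) := by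
    intro n
    have := (hc n).to_subtype
    have := (hP3 _ (e n).2).to_subtype
    exact Cardinal.eq.1 ((mk_eq_aleph0 _).trans (mk_eq_aleph0 _).symm)
  let φ := fun n => Classical.choice (hfib n)
  let k0 : Ω → Ω := fun x => φ (c x) ⟨x, rfl⟩
  have hk0 : ∀ n (x : {x | c x = n}), k0 x = φ n x := by
    rintro n ⟨x, rfl⟩
    rfl
  have hmem : ∀ x, k0 x ∈ (e (c x) : Set Ω) := fun x => (φ (c x) ⟨x, rfl⟩).2
  have huniq : ∀ y m n, y ∈ (e m : Set Ω) → y ∈ (e n : Set Ω) → m = n := by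
    intro y m n hm hn
    by_contra hne
    have : (e m : Set Ω) ≠ e n := fun h => hne (e.injective (Subtype.ext h))
    exact Set.disjoint_left.1 (hP4 _ (e m).2 _ (e n).2 this) hm hn
  have hbij : Function.Bijective k0 := by
    constructor
    · intro x y hxy
      have hcc : c y = c x := huniq (k0 y) _ _ (hmem y) (hxy ▸ hmem x)
      have h1 := hk0 (c x) ⟨x, rfl⟩
      have h2 := hk0 (c x) ⟨y, hcc⟩
      simp only at h1 h2
      have := (φ (c x)).injective (Subtype.ext (h1.symm.trans (hxy.trans h2)))
      exact congrArg Subtype.val this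
    · intro y
      have hy : y ∈ ⋃₀ P := by rw [hP5]; trivial
      obtain ⟨A, hA, hyA⟩ := hy
      obtain ⟨n, hn⟩ := e.surjective ⟨A, hA⟩
      have hyn : y ∈ (e n : Set Ω) := by rw [hn]; exact hyA
      refine ⟨(φ n).symm ⟨y, hyn⟩, ?_⟩
      rw [hk0]
      simp
  have him : ∀ n, k0 '' {x | c x = n} = (e n : Set Ω) := by
    intro n
    ext y
    constructor
    · rintro ⟨x, rfl, rfl⟩
      exact hmem x
    · intro hy
      exact ⟨(φ n).symm ⟨y, hy⟩, ((φ n).symm ⟨y, hy⟩).2, by rw [hk0]; simp⟩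
  refine ⟨Equiv.ofBijective k0 hbij, ?_⟩
  ext A
  constructor
  · rintro ⟨_, ⟨n, rfl⟩, rfl⟩
    simp only [Equiv.ofBijective_apply, Equiv.coe_ofBijective] at *
    rw [him]
    exact (e n).2
  · intro hA
    obtain ⟨n, hn⟩ := e.surjective ⟨A, hA⟩
    refine ⟨_, ⟨n, rfl⟩, ?_⟩
    simp only [Equiv.coe_ofBijective]
    rw [him, hn]

lemma main (Ω : Type) [Countable Ω] [Infinite Ω] (hMA : MASigmaCentered) :
    ∃ G : Subgroup (Equiv.Perm Ω), G ≠ ⊤ ∧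
      (∀ h : Equiv.Perm Ω, ∀ S : Finset Ω, ∃ g ∈ G, ∀ a ∈ S, g a = h a) ∧
      ∀ Pp Pq : Set (Set Ω), IsAleph0Section Pp → IsAleph0Section Pq →
        ∃ g ∈ G, (fun A : Set Ω => (g : Equiv.Perm Ω) '' A) '' Pp = Pq := by
  classical
  obtain ⟨c, hc⟩ : ∃ c : Ω → ℕ, ∀ n, {x | c x = n}.Infinite := by
    obtain ⟨e⟩ : Nonempty (Ω ≃ ℕ × ℕ) := Cardinal.eq.1 (by simp)
    refine ⟨fun x => (e x).1, fun n => ?_⟩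
    refine Set.infinite_of_injective_forall_mem (f := fun m : ℕ => e.symm (n, m)) ?_ ?_
    · intro a b hab
      simpa using hab
    · intro m
      simp
  obtain ⟨G, hG, hT⟩ := exists_group hMA hc
  refine ⟨G, ?_, ?_, ?_⟩
  · rintro rfl
    obtain ⟨a, b, hab⟩ := exists_pair_ne Ω
    rcases hG (Equiv.swap a b) trivial with h | h
    · exact hab (Equiv.swap_eq_one_iff.1 h)
    · refine Set.infinite_univ (α := Ω) ((h.union (Set.toFinite {a, b})).subset ?_)
      intro x _
      by_cases hx : x = a ∨ x = b
      · exact Or.inr hx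
      · push Not at hx
        exact Or.inl (Equiv.swap_apply_of_ne_of_ne hx.1 hx.2)
  · intro h S
    obtain ⟨g, hg, hgt⟩ := hT (h, S)
    exact ⟨g, hg, hgt.1⟩
  · have hto : ∀ P : Set (Set Ω), IsAleph0Section P →
        ∃ g ∈ G, (fun A : Set Ω => g '' A) '' P0 c = P := by
      intro P hP
      obtain ⟨k, hk⟩ := exists_perm_section hc P hP
      obtain ⟨g, hg, hgt⟩ := hT (k, ∅)
      refine ⟨g, hg, ?_⟩
      have := image_P0 hc (k⁻¹ * g) hgt.2
      rw [← hk]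
      conv_rhs => rw [← this]
      rw [Set.image_image]
      refine Set.image_congr fun A _ => ?_
      rw [Set.image_image]
      simp
    intro Pp Pq hp hq
    obtain ⟨g1, hg1, h1⟩ := hto Pp hp
    obtain ⟨g2, hg2, h2⟩ := hto Pq hq
    refine ⟨g2 * g1⁻¹, mul_mem hg2 (inv_mem hg1), ?_⟩
    rw [← h1, ← h2, Set.image_image]
    refine Set.image_congr fun A _ => ?_
    rw [Set.image_image]
    simp

end Neumann

/-- (MA(σ-centered)) There exists a proper dense subgroup `G < Sym(Ω)` (Ω countably
infinite) acting transitively on the `ℵ₀`-sections of `Ω`, where `g` sends a partition `Pp`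
to `{g '' A : A ∈ Pp}`. -/
theorem stmt_17 (Ω : Type) [Countable Ω] [Infinite Ω] (hMA : MASigmaCentered) :
    ∃ G : Subgroup (Equiv.Perm Ω), G ≠ ⊤ ∧
      (∀ h : Equiv.Perm Ω, ∀ S : Finset Ω, ∃ g ∈ G, ∀ a ∈ S, g a = h a) ∧
      ∀ Pp Pq : Set (Set Ω), IsAleph0Section Pp → IsAleph0Section Pq →
        ∃ g ∈ G, (fun A : Set Ω => (g : Equiv.Perm Ω) '' A) '' Pp = Pq :=
  Neumann.main Ω hMA
end
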